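/- arXiv:2501.11415 — 3 statements merged into one kernel-verified Lean document; each statement's English description precedes it below -/
import Mathlib

section
/- Let p be an odd prime, let G be a finite group of order divisible by p, and let S be a Sylow p-subgroup of G that is noncyclic metacyclic. Write E = Ω1(S) and suppose E is not contained in Z(S). Then Z := E ∩ Z(S) has order p, Z is invariant under every automorphism of S, and for every g ∈ G with gZg⁻¹ ≤ S one has gZg⁻¹ = Z (i.e. g ∈ N_G(Z)). -/
open Subgroup

/-- A group is metacyclic if it has a cyclic normal subgroup with cyclic quotient. -/
def IsMetacyclic (H : Type*) [Group H] : Prop :=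
  ∃ N : Subgroup H, ∃ _ : N.Normal, IsCyclic N ∧ IsCyclic (H ⧸ N)

/-- `Ω₁(S)`: the subgroup generated by the elements of `S` of order dividing `p`. -/
def omega1 {G : Type*} [Group G] (p : ℕ) (S : Subgroup G) : Subgroup G :=
  Subgroup.closure {g : G | g ∈ S ∧ g ^ p = 1}

/-- `Z = Ω₁(S) ∩ Z(S)`, as a subgroup of `G`. -/
def Zsub {G : Type*} [Group G] (p : ℕ) (S : Subgroup G) : Subgroup G :=
  omega1 p S ⊓ (S ⊓ Subgroup.centralizer (S : Set G))

/-!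
Write `E = Ω₁(S)` and `Z = E ∩ Z(S)`. As `p` is odd and `S` is metacyclic, elements of order `p`
commute, so `E` is the set of solutions of `x ^ p = 1` in `S` and has order at most `p ^ 2`; being
noncentral it has order `p ^ 2`, and `Z` has order `p`. Moreover `E` is weakly closed in `S`, so
Sylow's theorem in the centralizer of `g z g⁻¹` shows that fusion of `z ∈ Z` into `S` is already
achieved in `N_G(E)`.

If `N_G(E)` moved `Z`, the transvection of `E` with axis `Z` induced by `S`, together with a
conjugate of different axis, would generate `SL₂(p)`, which contains `-1`. As `-1` is central in
`Aut(E)`, a Frattini argument realizes it by an element of `N_G(S)`. But an automorphism `φ` of `S`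
that inverts `E` has no nontrivial fixed point, so every element of `S` has the form
`r * (φ r)⁻¹`, and `r` and `φ r` act in the same way on `E`; hence `E` would be central.
-/

section Arithmetic

variable {p : ℕ} [Fact p.Prime]

theorem dvd_sub_one_of_dvd_pow_sub_one {μ : ℤ} (h : (p : ℤ) ∣ μ ^ p - 1) : (p : ℤ) ∣ μ - 1 := by
  rw [← ZMod.intCast_zmod_eq_zero_iff_dvd] at h ⊢
  push_cast at h ⊢
  rwa [ZMod.pow_card] at h

theorem not_sq_dvd_geom_sum (hodd : Odd p) {μ : ℤ} (hμ : (p : ℤ) ∣ μ - 1) :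
    ¬(p : ℤ) ^ 2 ∣ ∑ i ∈ Finset.range p, μ ^ i := by
  obtain ⟨c, hc⟩ := hμ
  have hsub : (p : ℤ) ^ 2 ∣ (∑ i ∈ Finset.range p, μ ^ i) - p := by
    simpa only [one_pow, mul_one, ← hc, add_sub_cancel] using
      odd_sq_dvd_geom_sum₂_sub (R := ℤ) 1 c hodd
  intro h
  have hp : p ^ 2 ∣ p := by exact_mod_cast (dvd_iff_dvd_of_dvd_sub hsub).1 h
  have := (Nat.pow_dvd_pow_iff_le_right (Fact.out : p.Prime).one_lt).1
    (hp.trans (pow_one p).symm.dvd)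
  omega

end Arithmetic

section SemiconjBy

variable {G : Type*} [Group G] {n z : G} {μ : ℤ}

theorem pow_semiconjBy_zpow_pow (h : SemiconjBy z n (n ^ μ)) (k : ℕ) :
    SemiconjBy (z ^ k) n (n ^ μ ^ k) := by
  induction k with
  | zero => simp
  | succ k ih =>
    rw [pow_succ' z, pow_succ' μ, zpow_mul]
    exact (h.zpow_right _).mul_left ih

theorem mul_pow_of_semiconjBy_zpow (h : SemiconjBy z n (n ^ μ)) (k : ℕ) :
    (n * z) ^ k = n ^ (∑ i ∈ Finset.range k, μ ^ i) * z ^ k := by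
  induction k with
  | zero => simp
  | succ k ih =>
    rw [pow_succ, ih, Finset.sum_range_succ, zpow_add, pow_succ z, mul_assoc, mul_assoc,
      ← mul_assoc (z ^ k), (pow_semiconjBy_zpow_pow h k).eq, mul_assoc]

end SemiconjBy

section PGroup

variable {p : ℕ} [Fact p.Prime] {H : Type*} [Group H]

theorem pow_eq_one_of_mul_pow_eq_one (hodd : Odd p) (hH : IsPGroup p H) {n z : H} {μ : ℤ}
    (h : SemiconjBy z n (n ^ μ)) (hz : z ^ p = 1) (hnz : (n * z) ^ p = 1) : n ^ p = 1 := by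
  obtain ⟨r, hr⟩ := IsPGroup.iff_orderOf.1 hH n
  have hpow : (p ^ r : ℤ) ∣ μ ^ p - 1 := by
    have := pow_semiconjBy_zpow_pow h p
    rw [hz, SemiconjBy, one_mul, mul_one] at this
    rw [← Nat.cast_pow, ← hr, orderOf_dvd_iff_zpow_eq_one, zpow_sub, ← this, zpow_one,
      mul_inv_cancel]
  have hsum : (p ^ r : ℤ) ∣ ∑ i ∈ Finset.range p, μ ^ i := by
    rwa [mul_pow_of_semiconjBy_zpow h, hz, mul_one, ← orderOf_dvd_iff_zpow_eq_one, hr,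
      Nat.cast_pow] at hnz
  have hr1 : r ≤ 1 := by
    by_contra! hr2
    have hμ := dvd_sub_one_of_dvd_pow_sub_one ((dvd_pow_self (p : ℤ) (by omega)).trans hpow)
    exact not_sq_dvd_geom_sum hodd hμ ((pow_dvd_pow _ hr2).trans hsum)
  rw [← orderOf_dvd_iff_pow_eq_one, hr]
  simpa using pow_dvd_pow p hr1

theorem exists_ne_one_mem_center_of_normal [Finite H] (hH : IsPGroup p H) {N : Subgroup H}
    [N.Normal] (hN : N ≠ ⊥) : ∃ z ∈ N, z ≠ 1 ∧ z ∈ center H := by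
  have hdvd : p ∣ Nat.card N :=
    (hH.to_subgroup N).card_eq_or_dvd.resolve_left (mt card_eq_one.1 hN)
  have hconj : IsPGroup p (ConjAct H) := hH
  obtain ⟨z, hz, hz1⟩ :=
    hconj.exists_fixed_point_of_prime_dvd_card_of_fixed_point N hdvd (a := 1) fun g => smul_one g
  refine ⟨z, z.2, fun h => hz1 (Subtype.ext h.symm), mem_center_iff.2 fun g => ?_⟩
  exact mul_inv_eq_iff_eq_mul.1 (congrArg Subtype.val (hz (ConjAct.toConjAct g)))

theorem zpowers_eq_of_card_eq_prime {K : Subgroup H} (hK : Nat.card K = p) {z : H} (hz : z ∈ K)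
    (hz1 : z ≠ 1) : zpowers z = K := by
  have htop := zpowers_eq_top_of_prime_card hK (g := ⟨z, hz⟩) (by simpa using hz1)
  simpa [MonoidHom.map_zpowers, ← MonoidHom.range_eq_map] using congrArg (map K.subtype) htop

theorem le_center_of_card_eq_prime [Finite H] (hH : IsPGroup p H) {N : Subgroup H} [N.Normal]
    (hN : Nat.card N = p) : N ≤ center H := by
  have hbot : N ≠ ⊥ := fun h => (Fact.out : p.Prime).ne_one (by rw [← hN, h, card_bot])
  obtain ⟨z, hzN, hz1, hz⟩ := exists_ne_one_mem_center_of_normal hH hbot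
  rwa [← zpowers_eq_of_card_eq_prime hN hzN hz1, zpowers_le]

end PGroup

section IsCyclic

theorem card_dvd_of_forall_pow_eq_one {C : Type*} [Group C] [IsCyclic C] {n : ℕ}
    (h : ∀ x : C, x ^ n = 1) : Nat.card C ∣ n := by
  rw [← IsCyclic.exponent_eq_card]
  exact Monoid.exponent_dvd_of_forall_pow_eq_one h

theorem mem_zpowers_of_pow_eq_one {C : Type*} [Group C] [IsCyclic C] {p : ℕ} [Fact p.Prime]
    {x y : C} (hx : x ^ p = 1) (hy : y ^ p = 1) (hy1 : y ≠ 1) : x ∈ zpowers y := by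
  let _ : CommGroup C := IsCyclic.commGroup
  let K : Subgroup C := (powMonoidHom p : C →* C).ker
  have hKp : Nat.card K ∣ p := card_dvd_of_forall_pow_eq_one fun x => Subtype.ext x.2
  have : Finite K :=
    Nat.finite_of_card_ne_zero (ne_zero_of_dvd_ne_zero (Fact.out : p.Prime).ne_zero hKp)
  have hyK : zpowers y = K := eq_of_le_of_card_ge (zpowers_le.2 hy) <| by
    rw [Nat.card_zpowers, orderOf_eq_prime hy hy1]
    exact Nat.le_of_dvd (Fact.out : p.Prime).pos hKp
  exact hyK ▸ hx

theorem finite_of_isCyclic_of_isMulTorsion {C : Type*} [Group C] [IsCyclic C]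
    (hC : IsMulTorsion C) : Finite C := by
  obtain ⟨g, hg⟩ := isCyclic_iff_exists_zpowers_eq_top.1 ‹IsCyclic C›
  have : Finite (zpowers g) := finite_zpowers.2 (hC g)
  rw [hg] at this
  exact Finite.of_equiv _ topEquiv.toEquiv

variable {H : Type*} [Group H] {N : Subgroup H} [N.Normal] [IsCyclic N]

variable (N) in
theorem exists_forall_mem_semiconjBy_zpow (g : H) : ∃ μ : ℤ, ∀ n ∈ N, SemiconjBy g n (n ^ μ) := by
  obtain ⟨μ, hμ⟩ := (MulAut.conjNormal g : MulAut N).toMonoidHom.map_cyclic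
  refine ⟨μ, fun n hn => ?_⟩
  rw [SemiconjBy, ← mul_inv_eq_iff_eq_mul]
  exact congrArg Subtype.val (hμ ⟨n, hn⟩)

theorem normal_zpowers_of_mem_of_isCyclic {n : H} (hn : n ∈ N) : (zpowers n).Normal where
  conj_mem x hx g := by
    obtain ⟨μ, hμ⟩ := exists_forall_mem_semiconjBy_zpow N g
    rw [mul_inv_eq_iff_eq_mul.2 (hμ x (zpowers_le.2 hn hx)).eq]
    exact zpow_mem hx μ

theorem mem_center_of_mem_isCyclic_of_pow_eq_one [Finite H] {p : ℕ} [Fact p.Prime]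
    (hH : IsPGroup p H) {n : H} (hn : n ∈ N) (hnp : n ^ p = 1) : n ∈ center H := by
  rcases eq_or_ne n 1 with rfl | hn1
  · exact one_mem _
  have := normal_zpowers_of_mem_of_isCyclic hn
  have hcard : Nat.card (zpowers n) = p := by rw [Nat.card_zpowers, orderOf_eq_prime hnp hn1]
  exact le_center_of_card_eq_prime hH hcard (mem_zpowers n)

end IsCyclic

namespace IsMetacyclic

variable {p : ℕ} [Fact p.Prime] {H : Type*} [Group H]

theorem finite_of_isMulTorsion (hm : IsMetacyclic H) (hH : IsMulTorsion H) : Finite H := by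
  obtain ⟨N, _, _, _⟩ := hm
  have := finite_of_isCyclic_of_isMulTorsion (hH.subgroup N)
  have := finite_of_isCyclic_of_isMulTorsion (hH.of_surjective (QuotientGroup.mk'_surjective N))
  exact Finite.of_subgroup_quotient N

theorem commute_of_pow_eq_one [Finite H] (hm : IsMetacyclic H) (hodd : Odd p) (hH : IsPGroup p H)
    {x y : H} (hx : x ^ p = 1) (hy : y ^ p = 1) : Commute x y := by
  obtain ⟨N, _, _, _⟩ := hm
  by_cases hyN : y ∈ N
  · exact mem_center_iff.1 (mem_center_of_mem_isCyclic_of_pow_eq_one hH hyN hy) x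
  have hmk {z : H} (hz : z ^ p = 1) : (z : H ⧸ N) ^ p = 1 := by
    rw [← QuotientGroup.mk_pow, hz, QuotientGroup.mk_one]
  obtain ⟨k, hk⟩ := mem_zpowers_iff.1 <|
    mem_zpowers_of_pow_eq_one (hmk hx) (hmk hy) (mt (QuotientGroup.eq_one_iff y).1 hyN)
  obtain ⟨n, hn, rfl⟩ : ∃ n ∈ N, n * y ^ k = x :=
    ⟨x * (y ^ k)⁻¹, by simp [← QuotientGroup.eq_one_iff, ← hk], inv_mul_cancel_right _ _⟩
  obtain ⟨μ, hμ⟩ := exists_forall_mem_semiconjBy_zpow N (y ^ k)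
  have hyk : (y ^ k) ^ p = 1 := by rw [← zpow_natCast, zpow_comm, zpow_natCast, hy, one_zpow]
  have hnp := pow_eq_one_of_mul_pow_eq_one hodd hH (hμ n hn) hyk hx
  have hnc := mem_center_iff.1 (mem_center_of_mem_isCyclic_of_pow_eq_one hH hn hnp)
  exact Commute.mul_left (hnc y).symm (Commute.zpow_self y k)

theorem card_dvd_sq_of_forall_pow_eq_one (hm : IsMetacyclic H) {n : ℕ} {K : Subgroup H}
    (hK : ∀ x ∈ K, x ^ n = 1) : Nat.card K ∣ n ^ 2 := by
  obtain ⟨N, _, _, _⟩ := hm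
  have hKN : Nat.card (N ⊓ K : Subgroup H) ∣ n := by
    have : IsCyclic (N ⊓ K : Subgroup H) := isCyclic_of_le inf_le_left
    exact card_dvd_of_forall_pow_eq_one fun x => Subtype.ext (hK x x.2.2)
  have hKQ : N.relIndex K ∣ n := by
    rw [← QuotientGroup.ker_mk' N, relIndex_ker]
    refine card_dvd_of_forall_pow_eq_one ?_
    rintro ⟨_, x, hx, rfl⟩
    exact Subtype.ext (by simpa using congrArg (QuotientGroup.mk' N) (hK x hx))
  have hcard : Nat.card (N ⊓ K : Subgroup H) * N.relIndex K = Nat.card K := by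
    simpa only [relIndex_bot_left, bot_inf_eq] using relIndex_inf_mul_relIndex ⊥ N K
  rw [← hcard, sq]
  exact mul_dvd_mul hKN hKQ

end IsMetacyclic

theorem mem_omega1_iff {p : ℕ} [Fact p.Prime] (hodd : Odd p) {G : Type*} [Group G]
    {S : Subgroup G} [Finite S] (hS : IsPGroup p S) (hm : IsMetacyclic S) {g : G} :
    g ∈ omega1 p S ↔ g ∈ S ∧ g ^ p = 1 := by
  refine ⟨fun hg => ?_, fun hg => subset_closure hg⟩
  induction hg using closure_induction with
  | mem _ hx => exact hx
  | one => exact ⟨S.one_mem, one_pow p⟩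
  | mul x y _ _ hx hy =>
    have hxy : Commute (⟨x, hx.1⟩ : S) ⟨y, hy.1⟩ :=
      hm.commute_of_pow_eq_one hodd hS (Subtype.ext hx.2) (Subtype.ext hy.2)
    have hxy' : Commute x y := hxy.map S.subtype
    exact ⟨S.mul_mem hx.1 hy.1, by rw [hxy'.mul_pow, hx.2, hy.2, one_mul]⟩
  | inv x _ hx => exact ⟨S.inv_mem hx.1, by rw [inv_pow, hx.2, inv_one]⟩

theorem commute_of_mem_omega1 {p : ℕ} [Fact p.Prime] (hodd : Odd p) {G : Type*} [Group G]
    {S : Subgroup G} [Finite S] (hS : IsPGroup p S) (hm : IsMetacyclic S) {x y : G}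
    (hx : x ∈ omega1 p S) (hy : y ∈ omega1 p S) : Commute x y := by
  rw [mem_omega1_iff hodd hS hm] at hx hy
  have hxy : Commute (⟨x, hx.1⟩ : S) ⟨y, hy.1⟩ :=
    hm.commute_of_pow_eq_one hodd hS (Subtype.ext hx.2) (Subtype.ext hy.2)
  exact hxy.map S.subtype

section CentralIntersection

variable {p : ℕ} [Fact p.Prime] {H : Type*} [Group H]

theorem card_eq_prime_of_bot_lt_of_lt {K L : Subgroup H} (hK : ⊥ < K) (hKL : K < L)
    (hL : Nat.card L ∣ p ^ 2) : Nat.card K = p ∧ Nat.card L = p ^ 2 := by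
  have hp : p.Prime := Fact.out
  have : Finite L := Nat.finite_of_card_ne_zero (ne_zero_of_dvd_ne_zero (by simp [hp.ne_zero]) hL)
  have hlt : Nat.card K < Nat.card L := (Set.toFinite (L : Set H)).card_lt_card hKL
  have hK1 : Nat.card K ≠ 1 := mt card_eq_one.1 hK.ne'
  have hdvd := card_dvd_of_le hKL.le
  obtain ⟨j, hj, hLj⟩ := (Nat.dvd_prime_pow hp).1 hL
  obtain ⟨i, hi, hKi⟩ := (Nat.dvd_prime_pow hp).1 (hLj ▸ hdvd)
  rw [hLj, hKi, Nat.pow_lt_pow_iff_right hp.one_lt] at hlt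
  have hi0 : i ≠ 0 := by rintro rfl; exact hK1 hKi
  obtain ⟨rfl, rfl⟩ : i = 1 ∧ j = 2 := by omega
  exact ⟨by simpa using hKi, hLj⟩

theorem card_inf_center_eq_prime [Finite H] (hH : IsPGroup p H) {N : Subgroup H} [N.Normal]
    (hN : Nat.card N ∣ p ^ 2) (hNc : ¬N ≤ center H) :
    Nat.card (N ⊓ center H : Subgroup H) = p ∧ Nat.card N = p ^ 2 := by
  have hbot : N ≠ ⊥ := fun h => hNc (h ▸ bot_le)
  obtain ⟨z, hzN, hz1, hz⟩ := exists_ne_one_mem_center_of_normal hH hbot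
  refine card_eq_prime_of_bot_lt_of_lt (bot_lt_iff_ne_bot.2 fun h => hz1 ?_)
    (inf_lt_left.2 hNc) hN
  exact mem_bot.1 (h ▸ mem_inf.2 ⟨hzN, hz⟩)

theorem inv_mul_conj_mem_of_relIndex_eq_prime [Finite H] (hH : IsPGroup p H) {A N : Subgroup H}
    [A.Normal] [N.Normal] (hAN : A.relIndex N = p) {n : H} (hn : n ∈ N) (g : H) :
    n⁻¹ * (g * n * g⁻¹) ∈ A := by
  have : (N.map (QuotientGroup.mk' A)).Normal :=
    ‹N.Normal›.map _ (QuotientGroup.mk'_surjective A)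
  have hcard : Nat.card (N.map (QuotientGroup.mk' A)) = p := by
    rw [← relIndex_ker, QuotientGroup.ker_mk', hAN]
  have hcenter := le_center_of_card_eq_prime (hH.to_quotient A) hcard (mem_map_of_mem _ hn)
  rw [← QuotientGroup.eq, QuotientGroup.mk_mul, QuotientGroup.mk_inv, eq_mul_inv_iff_mul_eq,
    QuotientGroup.mk_mul]
  exact (mem_center_iff.1 hcenter g).symm

theorem relIndex_inf_center_eq_prime [Finite H] (hH : IsPGroup p H) {N : Subgroup H} [N.Normal]
    (hN : Nat.card N ∣ p ^ 2) (hNc : ¬N ≤ center H) : (N ⊓ center H).relIndex N = p := by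
  obtain ⟨hZ, hN'⟩ := card_inf_center_eq_prime hH hN hNc
  have := relIndex_mul_relIndex ⊥ (N ⊓ center H) N bot_le inf_le_left
  rw [relIndex_bot_left, relIndex_bot_left, hZ, hN', sq] at this
  exact Nat.eq_of_mul_eq_mul_left (Fact.out : p.Prime).pos this

end CentralIntersection

section FixedPointFree

variable {p : ℕ} [Fact p.Prime] {H : Type*} [Group H] {φ : H →* H}

theorem fixedPointFree_of_inverts (hodd : Odd p) (hH : IsPGroup p H)
    (hφ : ∀ x, x ^ p = 1 → φ x = x⁻¹) : MonoidHom.FixedPointFree φ := by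
  intro x hx
  by_contra hx1
  have hord : orderOf (x ^ (orderOf x / p)) = p :=
    orderOf_pow_orderOf_div (hH.isOfFinOrder (Fact.out : p.Prime).ne_zero x).orderOf_pos.ne'
      (hH.dvd_orderOf hx1)
  set y := x ^ (orderOf x / p) with hy
  have hinv : y = y⁻¹ := by
    rw [← hφ y (hord ▸ pow_orderOf_eq_one y), hy, map_pow, hx]
  have hdvd : p ∣ 2 := by
    rw [← hord, orderOf_dvd_iff_pow_eq_one, sq, mul_eq_one_iff_eq_inv]
    exact hinv
  have := (Nat.prime_dvd_prime_iff_eq Fact.out Nat.prime_two).1 hdvd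
  exact absurd (this ▸ hodd) (by decide)

theorem mem_center_of_inverts [Finite H] (hodd : Odd p) (hH : IsPGroup p H)
    (hφ : ∀ x, x ^ p = 1 → φ x = x⁻¹) {e : H} (he : e ^ p = 1) : e ∈ center H := by
  have hconj (r : H) : φ r * e * (φ r)⁻¹ = r * e * r⁻¹ := by
    have hinv := hφ (r * e⁻¹ * r⁻¹) (by simp [conj_pow, he])
    have he' : φ e⁻¹ = e := by rw [hφ e⁻¹ (by rw [inv_pow, he, inv_one]), inv_inv]
    simpa only [map_mul, map_inv φ r, he', mul_inv_rev, inv_inv, mul_assoc] using hinv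
  refine mem_center_iff.2 fun s => ?_
  obtain ⟨r, rfl⟩ := (fixedPointFree_of_inverts hodd hH hφ).commutatorMap_surjective s
  have hr := hconj r⁻¹
  rw [map_inv, inv_inv, inv_inv] at hr
  rw [MonoidHom.commutatorMap_apply, div_eq_mul_inv, ← mul_inv_eq_iff_eq_mul]
  calc r * (φ r)⁻¹ * e * (r * (φ r)⁻¹)⁻¹
      = r * ((φ r)⁻¹ * e * φ r) * r⁻¹ := by group
    _ = e := by rw [hr]; group

end FixedPointFree

section Transvection

variable {V : Type*}

theorem sq_apply_eq_inv [CommGroup V] {w : MulAut V} {a z : V} (ha : w a = z) (hz : w z = a⁻¹)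
    (htop : closure {a, z} = ⊤) (v : V) : (w ^ 2) v = v⁻¹ := by
  have heq : (w ^ 2).toMonoidHom = (MulEquiv.inv V).toMonoidHom := by
    refine MonoidHom.eq_of_eqOn_dense htop ?_
    rintro _ (rfl | rfl) <;> simp [sq, ha, hz]
  exact DFunLike.congr_fun heq v

theorem pow_apply_eq_mul_pow [Group V] {y : MulAut V} {b z : V} (hyb : y b = b)
    (hyz : y z = z * b) (k : ℕ) : (y ^ k) z = z * b ^ k := by
  induction k with
  | zero => simp
  | succ k ih =>
    rw [pow_succ', MulAut.mul_apply, ih, map_mul, map_pow, hyb, hyz, pow_succ', mul_assoc]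

variable {p : ℕ} [Fact p.Prime] [Group V]

/- In `SL₂` terms, `x` and `y` generate opposite root subgroups, `x * y ^ k * x` is a Weyl element
and its square is `-1`. -/
theorem exists_mem_closure_pair_apply_eq_inv (hV : Nat.card V = p ^ 2) {x y : MulAut V} {a b z : V}
    (hxa : x a = a * z) (hxz : x z = z) (hyb : y b = b) (hyz : y z = z * b)
    (hab : a ∈ zpowers b) (htop : closure {a, z} = ⊤) :
    ∃ w ∈ closure {x, y}, ∀ v, w v = v⁻¹ := by
  let _ : CommGroup V := IsPGroup.commGroupOfCardEqPrimeSq hV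
  have : Finite V := Nat.finite_of_card_ne_zero (by simp [hV, (Fact.out : p.Prime).ne_zero])
  obtain ⟨k, hk⟩ := (mem_powers_iff_mem_zpowers (x := b)).2 (inv_mem hab)
  have hyka : (y ^ k) a = a := by
    obtain ⟨j, rfl⟩ := mem_zpowers_iff.1 hab
    exact (MulAction.stabilizer (MulAut V) (b ^ j)).pow_mem
      (by simp [MulAction.mem_stabilizer_iff, hyb]) k
  have hykz : (y ^ k) z = z * a⁻¹ := by rw [pow_apply_eq_mul_pow hyb hyz, ← hk]
  have hwa : (x * y ^ k * x) a = z := by simp [hxa, hxz, hyka, hykz]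
  have hwz : (x * y ^ k * x) z = a⁻¹ := by simp [hxa, hxz, hykz]
  have hx : x ∈ closure {x, y} := subset_closure (by simp)
  have hy : y ∈ closure {x, y} := subset_closure (by simp)
  exact ⟨(x * y ^ k * x) ^ 2, pow_mem (mul_mem (mul_mem hx (pow_mem hy k)) hx) 2,
    sq_apply_eq_inv hwa hwz htop⟩

theorem closure_pair_eq_top (hV : Nat.card V = p ^ 2) {Z : Subgroup V} (hZ : Nat.card Z = p)
    {a z : V} (ha : a ∉ Z) (hz : z ∈ Z) (hz1 : z ≠ 1) : closure {a, z} = ⊤ := by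
  have : Finite V := Nat.finite_of_card_ne_zero (by simp [hV, (Fact.out : p.Prime).ne_zero])
  have hzZ : z ∈ closure {a, z} := subset_closure (by simp)
  have hlt : Z < closure {a, z} := by
    rw [← zpowers_eq_of_card_eq_prime hZ hz hz1] at ha ⊢
    exact lt_of_le_of_ne (zpowers_le.2 hzZ) fun h => ha (h ▸ subset_closure (by simp))
  have hbot : ⊥ < Z := bot_lt_iff_ne_bot.2 fun h => hz1 (mem_bot.1 (h ▸ hz))
  refine eq_top_of_card_eq _ ?_
  rw [hV, (card_eq_prime_of_bot_lt_of_lt hbot hlt (hV ▸ card_subgroup_dvd_card _)).2]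

theorem apply_ne_of_not_mem (hV : Nat.card V = p ^ 2) {Z : Subgroup V} (hZ : Nat.card Z = p)
    {x : MulAut V} (hx1 : x ≠ 1) {v z : V} (hv : v ∉ Z) (hz : z ∈ Z) (hz1 : z ≠ 1)
    (hxz : x z = z) : x v ≠ v := by
  intro hxv
  have heq : x.toMonoidHom = MonoidHom.id V :=
    MonoidHom.eq_of_eqOn_dense (closure_pair_eq_top hV hZ hv hz hz1) (by
      rintro _ (rfl | rfl)
      exacts [hxv, hxz])
  exact hx1 (MulEquiv.ext fun v => DFunLike.congr_fun heq v)

theorem exists_mem_closure_pair_apply_eq_inv_of_apply_not_mem (hV : Nat.card V = p ^ 2)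
    {x h : MulAut V} {Z : Subgroup V} (hx1 : x ≠ 1) (hxZ : ∀ z ∈ Z, x z = z)
    (hxV : ∀ v, v⁻¹ * x v ∈ Z) (hZ : Nat.card Z = p) {z₀ : V} (hz₀ : z₀ ∈ Z) (hhz₀ : h z₀ ∉ Z) :
    ∃ w ∈ closure {x, h}, ∀ v, w v = v⁻¹ := by
  have hz₀1 : z₀ ≠ 1 := by rintro rfl; exact hhz₀ (by simp)
  have hxv {v : V} (hv : v ∉ Z) : v⁻¹ * x v ≠ 1 := fun h =>
    apply_ne_of_not_mem hV hZ hx1 hv hz₀ hz₀1 (hxZ _ hz₀) (inv_mul_eq_one.1 h).symm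
  have hgen {u : V} (hu : u ∈ Z) (hu1 : u ≠ 1) : h z₀ ∈ zpowers (h u) := by
    rw [← zpowers_eq_of_card_eq_prime hZ hu hu1] at hz₀
    exact MonoidHom.map_zpowers h.toMonoidHom u ▸ mem_map_of_mem h.toMonoidHom hz₀
  obtain ⟨z, hz⟩ : ∃ z, z = (h z₀)⁻¹ * x (h z₀) := ⟨_, rfl⟩
  have hzZ : z ∈ Z := hz ▸ hxV _
  obtain ⟨c, rfl⟩ := h.surjective z
  have hc : c ∉ Z := fun hc => hhz₀ <| by
    have hc1 : c ≠ 1 := by rintro rfl; exact hxv hhz₀ (by rw [← hz, map_one])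
    exact zpowers_le.2 hzZ (hgen hc hc1)
  obtain ⟨w, hw, hwinv⟩ := exists_mem_closure_pair_apply_eq_inv hV (x := x) (y := h * x * h⁻¹)
    (z := h c) (b := h (c⁻¹ * x c)) (by simp [hz]) (hxZ _ hzZ) (by simp [hxZ _ (hxV c)])
    (by simp) (hgen (hxV c) (hxv hc)) (closure_pair_eq_top hV hZ hhz₀ hzZ (hz ▸ hxv hhz₀))
  refine ⟨w, (closure_le _).2 ?_ hw, hwinv⟩
  have hx : x ∈ closure {x, h} := subset_closure (by simp)
  have hh : h ∈ closure {x, h} := subset_closure (by simp)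
  rintro _ (rfl | rfl)
  exacts [hx, mul_mem (mul_mem hh hx) (inv_mem hh)]

end Transvection

section Omega

variable {G : Type*} [Group G] (p : ℕ) (S : Subgroup G)

theorem characteristic_closure_pow_eq_one {H : Type*} [Group H] (n : ℕ) :
    (closure {x : H | x ^ n = 1}).Characteristic :=
  characteristic_iff_le_comap.2 fun φ => (closure_le _).2 fun x (hx : x ^ n = 1) =>
    subset_closure (by simp [← map_pow, hx])

theorem omega1_le : omega1 p S ≤ S :=
  (closure_le S).2 fun _ hx => hx.1

theorem omega1_subgroupOf : (omega1 p S).subgroupOf S = closure {x : S | x ^ p = 1} := by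
  rw [← map_injective S.subtype_injective |>.eq_iff, map_subgroupOf_eq_of_le (omega1_le p S),
    MonoidHom.map_closure, omega1]
  congr 1
  ext g
  simp [Subtype.ext_iff, and_comm]

theorem inf_centralizer_subgroupOf : (S ⊓ centralizer (S : Set G)).subgroupOf S = center S := by
  ext x
  simp [mem_subgroupOf, mem_center_iff, mem_centralizer_iff, Subtype.ext_iff]

theorem Zsub_subgroupOf :
    (Zsub p S).subgroupOf S = (omega1 p S).subgroupOf S ⊓ center S := by
  rw [Zsub, ← inf_centralizer_subgroupOf]
  rfl

theorem characteristic_omega1_subgroupOf : ((omega1 p S).subgroupOf S).Characteristic :=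
  omega1_subgroupOf p S ▸ characteristic_closure_pow_eq_one p

theorem characteristic_Zsub_subgroupOf : ((Zsub p S).subgroupOf S).Characteristic := by
  have := characteristic_omega1_subgroupOf p S
  rw [Zsub_subgroupOf]
  infer_instance

theorem Zsub_le_omega1 : Zsub p S ≤ omega1 p S :=
  inf_le_left

variable {p S} in
theorem omega1_subgroupOf_le_center_iff :
    (omega1 p S).subgroupOf S ≤ center S ↔ omega1 p S ≤ S ⊓ centralizer (S : Set G) := by
  rw [← inf_centralizer_subgroupOf, ← comap_subtype (S ⊓ _), ← map_le_iff_le_comap,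
    map_subgroupOf_eq_of_le (omega1_le p S)]

theorem le_normalizer_omega1 : S ≤ normalizer (omega1 p S : Set G) := by
  have := characteristic_omega1_subgroupOf p S
  exact le_normalizer_of_normal_subgroupOf (omega1_le p S)

end Omega

/-- `E` is weakly closed in `S` (with respect to the ambient group): a conjugate of `E` that lies
in `S` is contained in `E`, which for finite `E` means that it is equal to `E`. -/
def IsWeaklyClosed {G : Type*} [Group G] (E S : Subgroup G) : Prop :=
  ∀ g : G, (∀ e ∈ E, g * e * g⁻¹ ∈ S) → ∀ e ∈ E, g * e * g⁻¹ ∈ E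

section Frattini

variable {p : ℕ} [Fact p.Prime] {G : Type*} [Group G] [Finite (Sylow p G)]

theorem exists_mem_conj_mem_sylow {K Q : Subgroup G} (T : Sylow p G) (hT : T ≤ K)
    (hQ : IsPGroup p Q) (hQK : Q ≤ K) : ∃ k ∈ K, ∀ q ∈ Q, k * q * k⁻¹ ∈ T := by
  obtain ⟨R, hR⟩ := (hQ.comap_subtype (K := K)).exists_le_sylow
  obtain ⟨k, hk⟩ := MulAction.exists_smul_eq K R (T.subtype hT)
  refine ⟨k, k.2, fun q hq => ?_⟩
  have hmem : k * ⟨q, hQK hq⟩ * k⁻¹ ∈ k • R :=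
    smul_mem_pointwise_smul _ (MulAut.conj k) (R : Subgroup K) (hR hq)
  rw [hk] at hmem
  exact hmem

theorem exists_mem_normalizer_sylow_map_eq {Q : Type*} [Group Q] (f : G →* Q) (T : Sylow p G)
    {n : G} (hn : f n ∈ normalizer (map f T : Set Q)) :
    ∃ t ∈ normalizer (T : Set G), f t = f n := by
  have hT : T ≤ comap f (map f T) := le_comap_map f T
  have hnT : ↑(n • T) ≤ comap f (map f T) := by
    rintro _ ⟨s, hs, rfl⟩
    simpa using (mem_normalizer_iff.1 hn (f s)).1 (mem_map_of_mem f hs)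
  obtain ⟨l, hl⟩ :=
    MulAction.exists_smul_eq (comap f (map f T)) ((n • T).subtype hnT) (T.subtype hT)
  simp_rw [Sylow.smul_subtype, Subgroup.smul_def, smul_smul] at hl
  have hln := Sylow.smul_eq_iff_mem_normalizer.1 (Sylow.subtype_injective hl)
  obtain ⟨s, hs, hsl⟩ := l.2
  exact ⟨s⁻¹ * (l * n), mul_mem (inv_mem (le_normalizer hs)) hln, by simp [hsl]⟩

theorem IsWeaklyClosed.exists_mem_normalizer_conj_eq {S : Sylow p G} {E : Subgroup G} [Finite E]
    (hE : IsWeaklyClosed E S) (hES : E ≤ S) {x g : G}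
    (hx : x ∈ centralizer (S : Set G)) (hgx : g * x * g⁻¹ ∈ centralizer (E : Set G)) :
    ∃ n ∈ normalizer (E : Set G), n * x * n⁻¹ = g * x * g⁻¹ := by
  let K := centralizer {g * x * g⁻¹}
  have hgS : ↑(g • S) ≤ K := by
    rintro _ ⟨s, hs, rfl⟩
    have hsx := mem_centralizer_iff.1 hx s hs
    simp only [K, mem_centralizer_singleton_iff]
    change g * s * g⁻¹ * _ = _ * (g * s * g⁻¹)
    simp only [conj_mul, hsx]
  have hEK : E ≤ K := fun e he => mem_centralizer_singleton_iff.2 (mem_centralizer_iff.1 hgx e he)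
  obtain ⟨k, hk, hkE⟩ := exists_mem_conj_mem_sylow (g • S) hgS (S.isPGroup'.to_le hES) hEK
  have hn : g⁻¹ * k ∈ normalizer (E : Set G) := by
    refine mem_normalizer_fintype (hE _ fun e he => ?_)
    obtain ⟨s, hs, hse⟩ := hkE e he
    have hse : g * s * g⁻¹ = k * e * k⁻¹ := hse
    have : g⁻¹ * k * e * (g⁻¹ * k)⁻¹ = s := by
      calc g⁻¹ * k * e * (g⁻¹ * k)⁻¹ = g⁻¹ * (k * e * k⁻¹) * g := by group
        _ = s := by rw [← hse]; group
    exact this ▸ hs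
  refine ⟨_, inv_mem hn, ?_⟩
  have hkx := mem_centralizer_singleton_iff.1 (inv_mem hk)
  calc (g⁻¹ * k)⁻¹ * x * (g⁻¹ * k)⁻¹⁻¹ = k⁻¹ * (g * x * g⁻¹) * k := by group
    _ = g * x * g⁻¹ := by rw [hkx]; group

end Frattini

section Metacyclic

variable {p : ℕ} [Fact p.Prime] {G : Type*} [Group G] {S : Subgroup G} [Finite S]

theorem card_omega1_dvd_sq (hodd : Odd p) (hS : IsPGroup p S) (hm : IsMetacyclic S) :
    Nat.card ((omega1 p S).subgroupOf S) ∣ p ^ 2 :=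
  hm.card_dvd_sq_of_forall_pow_eq_one fun _ hx =>
    Subtype.ext ((mem_omega1_iff hodd hS hm).1 hx).2

theorem card_omega1_and_card_Zsub (hodd : Odd p) (hS : IsPGroup p S) (hm : IsMetacyclic S)
    (hE : ¬omega1 p S ≤ S ⊓ centralizer (S : Set G)) :
    Nat.card (Zsub p S) = p ∧ Nat.card (omega1 p S) = p ^ 2 := by
  have := characteristic_omega1_subgroupOf p S
  rw [← Nat.card_congr (subgroupOfEquivOfLe (omega1_le p S)).toEquiv,
    ← Nat.card_congr (subgroupOfEquivOfLe ((Zsub_le_omega1 p S).trans (omega1_le p S))).toEquiv,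
    Zsub_subgroupOf]
  exact card_inf_center_eq_prime hS (card_omega1_dvd_sq hodd hS hm)
    (mt omega1_subgroupOf_le_center_iff.1 hE)

theorem inv_mul_conj_mem_Zsub (hodd : Odd p) (hS : IsPGroup p S) (hm : IsMetacyclic S)
    (hE : ¬omega1 p S ≤ S ⊓ centralizer (S : Set G)) {e s : G} (he : e ∈ omega1 p S)
    (hs : s ∈ S) : e⁻¹ * (s * e * s⁻¹) ∈ Zsub p S := by
  have := characteristic_omega1_subgroupOf p S
  have hmem := inv_mul_conj_mem_of_relIndex_eq_prime hS
    (relIndex_inf_center_eq_prime hS (card_omega1_dvd_sq hodd hS hm)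
      (mt omega1_subgroupOf_le_center_iff.1 hE))
    (n := ⟨e, omega1_le p S he⟩) he ⟨s, hs⟩
  rwa [← Zsub_subgroupOf] at hmem

theorem conj_mem_omega1 (hodd : Odd p) (hS : IsPGroup p S) (hm : IsMetacyclic S) {g e : G}
    (he : e ∈ omega1 p S) (hge : g * e * g⁻¹ ∈ S) : g * e * g⁻¹ ∈ omega1 p S :=
  subset_closure ⟨hge, by
    rw [conj_pow, ((mem_omega1_iff hodd hS hm).1 he).2, mul_one, mul_inv_cancel]⟩

theorem isWeaklyClosed_omega1 (hodd : Odd p) (hS : IsPGroup p S) (hm : IsMetacyclic S) :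
    IsWeaklyClosed (omega1 p S) S :=
  fun _ hg e he => conj_mem_omega1 hodd hS hm he (hg e he)

end Metacyclic

section Fusion

variable {p : ℕ} [Fact p.Prime] {G : Type*} [Group G] [Finite (Sylow p G)] {S : Sylow p G}
  [Finite S]

theorem omega1_le_centralizer_of_normalizer_inverts (hodd : Odd p)
    {m : normalizer (omega1 p (S : Subgroup G) : Set G)}
    (hm : ∀ e, normalizerMonoidHom _ m e = e⁻¹) :
    omega1 p (S : Subgroup G) ≤ (S : Subgroup G) ⊓ centralizer ((S : Subgroup G) : Set G) := by
  let f := (omega1 p (S : Subgroup G)).normalizerMonoidHom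
  have hcenter : f m ∈ center (MulAut _) :=
    mem_center_iff.2 fun φ => MulEquiv.ext fun e => by simp only [f, MulAut.mul_apply, hm, map_inv]
  obtain ⟨t, ht, hft⟩ := exists_mem_normalizer_sylow_map_eq f
    (S.subtype (le_normalizer_omega1 p _)) (center_le_normalizer _ hcenter)
  have htS : (t : G) ∈ normalizer (S : Set G) := by
    rw [← Sylow.smul_eq_iff_mem_normalizer, Sylow.smul_subtype] at ht
    exact Sylow.smul_eq_iff_mem_normalizer.1 (Sylow.subtype_injective ht)
  have hinv (x : S) (hx : x ^ p = 1) :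
      normalizerMonoidHom (S : Subgroup G) ⟨t, htS⟩ x = x⁻¹ := by
    have hxE : (x : G) ∈ omega1 p (S : Subgroup G) :=
      subset_closure ⟨x.2, congrArg Subtype.val hx⟩
    have hte : f t ⟨x, hxE⟩ = ⟨x, hxE⟩⁻¹ := by rw [hft, hm]
    have htx : (t : G) * x * (t : G)⁻¹ = (x : G)⁻¹ := Subtype.ext_iff.1 hte
    exact Subtype.ext htx
  rw [← omega1_subgroupOf_le_center_iff, omega1_subgroupOf, closure_le]
  exact fun x hx => mem_center_of_inverts hodd S.isPGroup' (φ := MulEquiv.toMonoidHom _) hinv hx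

theorem conj_mem_Zsub_of_mem_normalizer_omega1 (hodd : Odd p) (hm : IsMetacyclic S)
    (hE : ¬omega1 p (S : Subgroup G) ≤ (S : Subgroup G) ⊓ centralizer ((S : Subgroup G) : Set G))
    {n z : G} (hn : n ∈ normalizer (omega1 p (S : Subgroup G) : Set G))
    (hz : z ∈ Zsub p (S : Subgroup G)) : n * z * n⁻¹ ∈ Zsub p (S : Subgroup G) := by
  by_contra hnz
  obtain ⟨hZcard, hEcard⟩ := card_omega1_and_card_Zsub hodd S.isPGroup' hm hE
  obtain ⟨e, he, heC⟩ := SetLike.not_le_iff_exists.1 hE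
  have heS : e ∈ (S : Subgroup G) := omega1_le p _ he
  obtain ⟨s, hs, hse⟩ : ∃ s ∈ S, s * e ≠ e * s := by
    simpa [mem_centralizer_iff, heS] using heC
  let E := omega1 p (S : Subgroup G)
  let Z := (Zsub p (S : Subgroup G)).subgroupOf E
  let x := E.normalizerMonoidHom ⟨s, le_normalizer_omega1 p _ hs⟩
  let h := E.normalizerMonoidHom ⟨n, hn⟩
  have hx1 : x ≠ 1 := fun hx => hse <| mul_inv_eq_iff_eq_mul.1 <|
    Subtype.ext_iff.1 (DFunLike.congr_fun hx (⟨e, he⟩ : E))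
  have hxZ (v : E) (hv : v ∈ Z) : x v = v :=
    Subtype.ext (mul_inv_eq_iff_eq_mul.2 (mem_centralizer_iff.1 hv.2.2 s hs))
  have hxE (v : E) : v⁻¹ * x v ∈ Z := inv_mul_conj_mem_Zsub hodd S.isPGroup' hm hE v.2 hs
  have hZcard' : Nat.card Z = p :=
    (Nat.card_congr (subgroupOfEquivOfLe (Zsub_le_omega1 p _)).toEquiv).trans hZcard
  obtain ⟨w, hw, hinv⟩ := exists_mem_closure_pair_apply_eq_inv_of_apply_not_mem hEcard (h := h)
    (z₀ := ⟨z, hz.1⟩) hx1 hxZ hxE hZcard' hz hnz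
  have hrange : closure {x, h} ≤ E.normalizerMonoidHom.range := by
    simp [closure_le, Set.insert_subset_iff, x, h]
  obtain ⟨m, rfl⟩ := hrange hw
  exact hE (omega1_le_centralizer_of_normalizer_inverts hodd hinv)

theorem conj_mem_Zsub_of_conj_mem (hodd : Odd p) (hm : IsMetacyclic S)
    (hE : ¬omega1 p (S : Subgroup G) ≤ (S : Subgroup G) ⊓ centralizer ((S : Subgroup G) : Set G))
    {g z : G} (hz : z ∈ Zsub p (S : Subgroup G)) (hgz : g * z * g⁻¹ ∈ S) :
    g * z * g⁻¹ ∈ Zsub p (S : Subgroup G) := by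
  have hgzE := conj_mem_omega1 hodd S.isPGroup' hm hz.1 hgz
  have : Finite (omega1 p (S : Subgroup G)) := Finite.Set.subset (S : Set G) (omega1_le p _)
  obtain ⟨n, hn, hnz⟩ :=
    (isWeaklyClosed_omega1 hodd S.isPGroup' hm).exists_mem_normalizer_conj_eq (omega1_le p _)
      hz.2.2 fun _ he => commute_of_mem_omega1 hodd S.isPGroup' hm he hgzE
  rw [← hnz]
  exact conj_mem_Zsub_of_mem_normalizer_omega1 hodd hm hE hn hz

end Fusion

theorem stmt12_general (p : ℕ) [Fact p.Prime] (hodd : Odd p) {G : Type*} [Group G]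
    [Finite (Sylow p G)] (S : Sylow p G) (hmc : IsMetacyclic (S : Subgroup G))
    (hE : ¬omega1 p (S : Subgroup G) ≤
      (S : Subgroup G) ⊓ Subgroup.centralizer ((S : Subgroup G) : Set G)) :
    Nat.card (Zsub p (S : Subgroup G)) = p ∧
      Subgroup.Characteristic ((Zsub p (S : Subgroup G)).subgroupOf (S : Subgroup G)) ∧
      ∀ g : G,
        Subgroup.map (MulAut.conj g).toMonoidHom (Zsub p (S : Subgroup G)) ≤ (S : Subgroup G) →
        Subgroup.map (MulAut.conj g).toMonoidHom (Zsub p (S : Subgroup G)) =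
          Zsub p (S : Subgroup G) := by
  have : Finite S := hmc.finite_of_isMulTorsion
    (S.isPGroup'.isOfFinOrder (Fact.out : p.Prime).ne_zero)
  have hcard := (card_omega1_and_card_Zsub hodd S.isPGroup' hmc hE).1
  have : Finite (Zsub p (S : Subgroup G)) :=
    Nat.finite_of_card_ne_zero (hcard.trans_ne (Fact.out : p.Prime).ne_zero)
  refine ⟨hcard, characteristic_Zsub_subgroupOf p _, fun g hg => eq_of_le_of_card_ge ?_ ?_⟩
  · rintro _ ⟨z, hz, rfl⟩
    exact conj_mem_Zsub_of_conj_mem hodd hmc hE hz (hg (mem_map_of_mem _ hz))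
  · exact (card_map_of_injective (MulAut.conj g).injective).ge

theorem stmt12 (p : ℕ) [Fact p.Prime] (hodd : Odd p) {G : Type*} [Group G] [Fintype G]
    (hdvd : p ∣ Fintype.card G) (S : Sylow p G)
    (hnc : ¬IsCyclic (S : Subgroup G)) (hmc : IsMetacyclic (S : Subgroup G))
    (hE : ¬omega1 p (S : Subgroup G) ≤
      (S : Subgroup G) ⊓ Subgroup.centralizer ((S : Subgroup G) : Set G)) :
    Nat.card (Zsub p (S : Subgroup G)) = p ∧
      Subgroup.Characteristic ((Zsub p (S : Subgroup G)).subgroupOf (S : Subgroup G)) ∧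
      ∀ g : G,
        Subgroup.map (MulAut.conj g).toMonoidHom (Zsub p (S : Subgroup G)) ≤ (S : Subgroup G) →
        Subgroup.map (MulAut.conj g).toMonoidHom (Zsub p (S : Subgroup G)) =
          Zsub p (S : Subgroup G) :=
  stmt12_general p hodd S hmc hE
end

section
/- Let p be an odd prime and let l, m, n, q be positive integers with l ≤ m, q ≤ m ≤ l + n, q + l ≥ m and (1+p^l)^{p^n} ≡ 1 (mod p^m). Let S be a finite group of order p^{m+n} generated by elements x, y such that x has order p^m, y^{p^n} = x^{p^q} and y·x·y⁻¹ = x^{1+p^l}. Then Z(S) = ⟨x^{p^{m−l}}, y^{p^{m−l}}⟩ and Ω1(S) = ⟨x^{p^{m−1}}, x^{−p^{q−1}}·y^{p^{n−1}}⟩. In particular, if q = m then Ω1(S) = ⟨x^{p^{m−1}}, y^{p^{n−1}}⟩. -/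
open Subgroup

/-- `Ω₁(S)`: the subgroup generated by the elements of `S` of order dividing `p`. -/
def omega1Grp (p : ℕ) (S : Type*) [Group S] : Subgroup S :=
  Subgroup.closure {g : S | g ^ p = 1}

/-!
Every element of `S` has the form `x ^ a * y ^ b`, and conjugation by `y ^ b` raises `x` to the
power `(1 + p ^ l) ^ b`. The centre is therefore cut out by `p ^ m ∣ p ^ l * a` and
`p ^ m ∣ (1 + p ^ l) ^ b - 1`; by lifting the exponent, both say that the exponent is divisible by
`p ^ (m - l)`.

If `(x ^ a * y ^ b) ^ p = 1`, then `b` is a multiple of `p ^ (n - 1)`, because `y` has order `p ^ n`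
modulo `⟨x⟩`. Now `y ^ p ^ (n - 1)` acts on `⟨x⟩` with exponent congruent to `1` modulo
`p ^ (m - 1)`, so, `p` being odd, the `p`-th power map is multiplicative on products of powers of
`x` and of `y ^ p ^ (n - 1)`. Writing `b = p ^ (n - 1) * c`, the equation becomes
`p ^ (m - 1) ∣ a + p ^ (q - 1) * c`.
-/

section Arithmetic

lemma sub_one_dvd_geom_sum_sub_natCast {R : Type*} [CommRing R] (v : R) (k : ℕ) :
    v - 1 ∣ ∑ i ∈ Finset.range k, v ^ i - k := by
  have hterms : ∑ i ∈ Finset.range k, v ^ i - k = ∑ i ∈ Finset.range k, (v ^ i - 1) := by simp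
  rw [hterms]
  exact Finset.dvd_sum fun i _ ↦ sub_one_dvd_pow_sub_one v i

lemma natCast_dvd_sum_range_of_odd {R : Type*} [CommRing R] {k : ℕ} (hk : Odd k) :
    (k : R) ∣ ∑ i ∈ Finset.range k, (i : R) := by
  have htwo : 2 ∣ k - 1 := (Nat.Odd.sub_odd hk odd_one).two_dvd
  rw [← Nat.cast_sum, Finset.sum_range_id, Nat.mul_div_assoc k htwo]
  exact Nat.cast_dvd_cast (dvd_mul_right k _)

lemma natCast_mul_sub_one_dvd_geom_sum_sub_natCast {R : Type*} [CommRing R] {v : R} {k : ℕ}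
    (hk : Odd k) (hv : (k : R) ∣ v - 1) :
    k * (v - 1) ∣ ∑ i ∈ Finset.range k, v ^ i - k := by
  have hdouble : ∑ i ∈ Finset.range k, v ^ i - k =
      (∑ i ∈ Finset.range k, ∑ j ∈ Finset.range i, v ^ j) * (v - 1) := by
    rw [Finset.sum_mul]
    simp only [geom_sum_mul, Finset.sum_sub_distrib, Finset.sum_const,
      Finset.card_range, nsmul_eq_mul, mul_one]
  have hinner : (k : R) ∣ ∑ i ∈ Finset.range k, (∑ j ∈ Finset.range i, v ^ j - i) :=
    Finset.dvd_sum fun i _ ↦ hv.trans (sub_one_dvd_geom_sum_sub_natCast v i)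
  rw [Finset.sum_sub_distrib, dvd_sub_left (natCast_dvd_sum_range_of_odd hk)] at hinner
  rw [hdouble]
  exact mul_dvd_mul_right hinner _

lemma pow_dvd_pow_mul_iff {R : Type*} [CommMonoidWithZero R] [IsCancelMulZero R] {p : R}
    (hp : p ≠ 0) {l m : ℕ} (hlm : l ≤ m) (a : R) : p ^ m ∣ p ^ l * a ↔ p ^ (m - l) ∣ a := by
  rw [← pow_mul_pow_sub p hlm, mul_dvd_mul_iff_left (pow_ne_zero l hp)]

lemma pow_dvd_one_add_pow_pow_sub_one_iff {p l : ℕ} [Fact p.Prime] (hodd : Odd p) (hl : 0 < l)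
    (m b : ℕ) : (p : ℤ) ^ m ∣ (1 + (p : ℤ) ^ l) ^ b - 1 ↔ p ^ (m - l) ∣ b := by
  have hp : Prime (p : ℤ) := Nat.prime_iff_prime_int.1 Fact.out
  have hdvd : (p : ℤ) ∣ p ^ l := dvd_pow_self _ hl.ne'
  have hndvd : ¬ (p : ℤ) ∣ 1 + p ^ l := fun h ↦ hp.not_dvd_one ((dvd_add_left hdvd).1 h)
  have hlte := Int.emultiplicity_pow_sub_pow Fact.out hodd (y := 1) (by simpa using hdvd) hndvd b
  rw [one_pow, add_sub_cancel_left, emultiplicity_pow_self_of_prime hp] at hlte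
  rw [pow_dvd_iff_le_emultiplicity, pow_dvd_iff_le_emultiplicity, hlte, ENat.natCast_sub,
    tsub_le_iff_left]

end Arithmetic

section Generation

variable {G : Type*} [Group G] {x y : G}

lemma closure_pair_eq_zpowers_sup (x y : G) : closure {x, y} = zpowers x ⊔ zpowers y := by
  rw [zpowers_eq_closure, zpowers_eq_closure, ← Subgroup.closure_union, Set.singleton_union]

lemma closure_pair_inv_mul (x y : G) : closure {x, x⁻¹ * y} = closure {x, y} := by
  apply le_antisymm <;> rw [closure_le, Set.pair_subset_iff]
  · exact ⟨mem_closure_of_mem (by simp),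
      mul_mem (inv_mem (mem_closure_of_mem (by simp))) (mem_closure_of_mem (by simp))⟩
  · refine ⟨mem_closure_of_mem (by simp), ?_⟩
    rw [SetLike.mem_coe, ← mul_inv_cancel_left x y]
    exact mul_mem (mem_closure_of_mem (by simp)) (mem_closure_of_mem (by simp))

lemma mem_center_iff_of_closure_pair_eq_top (hgen : closure {x, y} = ⊤) {g : G} :
    g ∈ center G ↔ Commute x g ∧ Commute y g := by
  rw [← centralizer_univ, ← coe_top, ← hgen, centralizer_closure, mem_centralizer_iff]
  simp [Commute, SemiconjBy]

lemma pow_mem_iff_index_dvd {N : Subgroup G} [N.Normal] (hN : N ⊔ zpowers y = ⊤) (b : ℕ) :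
    y ^ b ∈ N ↔ N.index ∣ b := by
  have hcyclic : zpowers (y : G ⧸ N) = ⊤ := by
    rw [← QuotientGroup.mk'_apply, ← MonoidHom.map_zpowers,
      ← map_top_of_surjective _ (QuotientGroup.mk'_surjective N), ← hN, Subgroup.map_sup,
      QuotientGroup.map_mk'_self, bot_sup_eq]
  rw [← QuotientGroup.eq_one_iff, QuotientGroup.mk_pow, ← orderOf_dvd_iff_pow_eq_one,
    ← Nat.card_zpowers, hcyclic, card_top, index]

lemma zpow_mem_of_pow_mem {H : Subgroup G} {r : ℕ} {a : ℤ} (hx : x ^ r ∈ H)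
    (ha : (r : ℤ) ∣ a) : x ^ a ∈ H := by
  obtain ⟨c, rfl⟩ := ha
  rw [zpow_mul, zpow_natCast]
  exact zpow_mem hx c

end Generation

section Metacyclic

variable {G : Type*} [Group G] {x y : G} {u : ℤ}

lemma semiconjBy_pow_zpow (h : SemiconjBy y x (x ^ u)) (b : ℕ) (a : ℤ) :
    SemiconjBy (y ^ b) (x ^ a) (x ^ (u ^ b * a)) := by
  suffices hb : SemiconjBy (y ^ b) x (x ^ u ^ b) by
    simpa only [← zpow_mul] using hb.zpow_right a
  induction b with
  | zero => simp
  | succ b ih =>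
    rw [pow_succ, pow_succ, zpow_mul]
    exact (ih.zpow_right u).mul_left h

lemma zpow_mul_pow_pow (h : SemiconjBy y x (x ^ u)) (a : ℤ) (b k : ℕ) :
    (x ^ a * y ^ b) ^ k = x ^ (a * ∑ i ∈ Finset.range k, (u ^ b) ^ i) * y ^ (b * k) := by
  induction k with
  | zero => simp
  | succ k ih =>
    calc (x ^ a * y ^ b) ^ (k + 1)
        = x ^ (a * ∑ i ∈ Finset.range k, (u ^ b) ^ i) * (y ^ (b * k) * x ^ a) * y ^ b := by
          rw [pow_succ, ih]; group
      _ = x ^ (a * ∑ i ∈ Finset.range (k + 1), (u ^ b) ^ i) * y ^ (b * (k + 1)) := by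
          rw [(semiconjBy_pow_zpow h _ a).eq, Finset.sum_range_succ, pow_mul, mul_add_one b k,
            pow_add, mul_add, zpow_add, mul_comm a ((u ^ b) ^ k)]
          simp only [mul_assoc]

lemma zpow_mul_pow_mem_closure_pair (h : SemiconjBy y x (x ^ u)) {r : ℕ} (hr : (r : ℤ) ∣ u - 1)
    {t a : ℤ} {c : ℕ} (ha : (r : ℤ) ∣ a + t * c) :
    x ^ a * y ^ c ∈ closure {x ^ r, x ^ (-t) * y} := by
  set σ := ∑ i ∈ Finset.range c, u ^ i
  have hpow : (x ^ (-t) * y) ^ c = x ^ (-t * σ) * y ^ c := by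
    simpa only [pow_one, one_mul] using zpow_mul_pow_pow h (-t) 1 c
  have hsplit : x ^ a * y ^ c = x ^ (a + t * σ) * (x ^ (-t) * y) ^ c := by
    rw [hpow, ← mul_assoc, ← zpow_add, neg_mul, add_neg_cancel_right]
  have hdvd : (r : ℤ) ∣ a + t * σ := by
    have hσ : (r : ℤ) ∣ t * (σ - c) :=
      (hr.trans (sub_one_dvd_geom_sum_sub_natCast u c)).mul_left t
    have hsum : a + t * σ = a + t * c + t * (σ - c) := by ring
    exact hsum ▸ dvd_add ha hσ
  rw [hsplit]
  exact mul_mem (zpow_mem_of_pow_mem (mem_closure_of_mem (by simp)) hdvd)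
    (pow_mem (mem_closure_of_mem (by simp)) c)

lemma zpow_mul_pow_pow_of_odd (h : SemiconjBy y x (x ^ u)) {k : ℕ} (hk : Odd k)
    (hku : (k : ℤ) ∣ u - 1) (hx : (orderOf x : ℤ) ∣ k * (u - 1)) (a : ℤ) (b : ℕ) :
    (x ^ a * y ^ b) ^ k = x ^ (a * k) * y ^ (b * k) := by
  have hub : u - 1 ∣ u ^ b - 1 := sub_one_dvd_pow_sub_one u b
  have hsum : (orderOf x : ℤ) ∣ ∑ i ∈ Finset.range k, (u ^ b) ^ i - k :=
    (hx.trans (mul_dvd_mul_left _ hub)).trans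
      (natCast_mul_sub_one_dvd_geom_sum_sub_natCast hk (hku.trans hub))
  rw [zpow_mul_pow_pow h, mul_left_inj, ← orderOf_dvd_sub_iff_zpow_eq_zpow, ← mul_sub]
  exact hsum.mul_left a

lemma zpow_mul_pow_mem_center_iff (h : SemiconjBy y x (x ^ u)) (hgen : closure {x, y} = ⊤)
    (a : ℤ) (b : ℕ) :
    x ^ a * y ^ b ∈ center G ↔
      (orderOf x : ℤ) ∣ (u - 1) * a ∧ (orderOf x : ℤ) ∣ u ^ b - 1 := by
  have hx : Commute x (x ^ a * y ^ b) ↔ (orderOf x : ℤ) ∣ u ^ b - 1 := by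
    have hyb := (semiconjBy_pow_zpow h b 1).eq
    rw [zpow_one, mul_one] at hyb
    rw [orderOf_dvd_sub_iff_zpow_eq_zpow, zpow_one, commute_iff_eq, ← mul_assoc,
      (Commute.self_zpow x a).eq, mul_assoc, mul_assoc, mul_right_inj, hyb, mul_left_inj, eq_comm]
  have hy : Commute y (x ^ a * y ^ b) ↔ (orderOf x : ℤ) ∣ (u - 1) * a := by
    have hya := (semiconjBy_pow_zpow h 1 a).eq
    rw [pow_one, pow_one] at hya
    rw [sub_one_mul, orderOf_dvd_sub_iff_zpow_eq_zpow, commute_iff_eq, ← mul_assoc, hya,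
      mul_assoc, mul_assoc, (Commute.self_pow y b).eq, mul_left_inj]
  rw [mem_center_iff_of_closure_pair_eq_top hgen, hx, hy, and_comm]

variable [Finite G]

lemma zpowers_normal_of_semiconjBy (h : SemiconjBy y x (x ^ u)) (hgen : closure {x, y} = ⊤) :
    (zpowers x).Normal := by
  have hy : y ∈ normalizer (zpowers x : Set G) := by
    refine mem_normalizer_fintype fun _ hz ↦ ?_
    obtain ⟨a, rfl⟩ := mem_zpowers_iff.1 hz
    rw [(h.zpow_right a).eq, mul_inv_cancel_right]
    exact zpow_mem (zpow_mem_zpowers x u) a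
  rw [← normalizer_eq_top_iff, eq_top_iff, ← hgen, closure_le, Set.pair_subset_iff]
  exact ⟨le_normalizer (mem_zpowers x), hy⟩

lemma exists_eq_zpow_mul_pow (h : SemiconjBy y x (x ^ u)) (hgen : closure {x, y} = ⊤) (g : G) :
    ∃ (a : ℤ) (b : ℕ), g = x ^ a * y ^ b := by
  have := zpowers_normal_of_semiconjBy h hgen
  have hg : g ∈ zpowers x ⊔ zpowers y := by
    rw [← closure_pair_eq_zpowers_sup, hgen]
    exact mem_top g
  obtain ⟨_, ha, _, hb, rfl⟩ := mem_sup_of_normal_left.1 hg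
  obtain ⟨a, rfl⟩ := mem_zpowers_iff.1 ha
  obtain ⟨b, rfl⟩ := mem_powers_iff_mem_zpowers.2 hb
  exact ⟨a, b, rfl⟩

lemma pow_mem_zpowers_iff_index_dvd (h : SemiconjBy y x (x ^ u)) (hgen : closure {x, y} = ⊤)
    (b : ℕ) : y ^ b ∈ zpowers x ↔ (zpowers x).index ∣ b := by
  have := zpowers_normal_of_semiconjBy h hgen
  exact pow_mem_iff_index_dvd (by rw [← closure_pair_eq_zpowers_sup, hgen]) b

theorem center_eq_closure_pair (h : SemiconjBy y x (x ^ u)) (hgen : closure {x, y} = ⊤)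
    {d e : ℕ} (hd : ∀ a : ℤ, (orderOf x : ℤ) ∣ (u - 1) * a ↔ (d : ℤ) ∣ a)
    (he : ∀ b : ℕ, (orderOf x : ℤ) ∣ u ^ b - 1 ↔ e ∣ b) :
    center G = closure {x ^ d, y ^ e} := by
  have hcenter (a : ℤ) (b : ℕ) : x ^ a * y ^ b ∈ center G ↔ (d : ℤ) ∣ a ∧ e ∣ b := by
    rw [zpow_mul_pow_mem_center_iff h hgen, hd, he]
  apply le_antisymm
  · intro g hg
    obtain ⟨a, b, rfl⟩ := exists_eq_zpow_mul_pow h hgen g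
    obtain ⟨ha, c, rfl⟩ := (hcenter a b).1 hg
    rw [pow_mul]
    exact mul_mem (zpow_mem_of_pow_mem (mem_closure_of_mem (by simp)) ha)
      (pow_mem (mem_closure_of_mem (by simp)) c)
  · rw [closure_le, Set.pair_subset_iff]
    constructor
    · simpa using (hcenter d 0).2 (by simp)
    · simpa using (hcenter 0 e).2 (by simp)

theorem omega1Grp_eq_closure_pair (h : SemiconjBy y x (x ^ u)) (hgen : closure {x, y} = ⊤)
    {k r s t : ℕ} (hk : Odd k) (hx : orderOf x = r * k) (hindex : (zpowers x).index = s * k)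
    (hyx : y ^ (s * k) = x ^ (t * k)) (hk_dvd : (k : ℤ) ∣ u ^ s - 1)
    (hr_dvd : (r : ℤ) ∣ u ^ s - 1) :
    omega1Grp k G = closure {x ^ r, (x ^ t)⁻¹ * y ^ s} := by
  have hs : SemiconjBy (y ^ s) x (x ^ u ^ s) := by
    simpa only [zpow_one, mul_one] using semiconjBy_pow_zpow h s 1
  have horder : (orderOf x : ℤ) ∣ k * (u ^ s - 1) := by
    rw [hx, mul_comm r, Nat.cast_mul]
    exact mul_dvd_mul_left _ hr_dvd
  have hpow (a : ℤ) (c : ℕ) : (x ^ a * (y ^ s) ^ c) ^ k = 1 ↔ (r : ℤ) ∣ a + t * c := by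
    have hyk : (y ^ s) ^ (c * k) = x ^ ((t : ℤ) * c * k) := by
      rw [mul_right_comm, zpow_mul, ← Nat.cast_mul, zpow_natCast, zpow_natCast, ← hyx, ← pow_mul,
        ← pow_mul, mul_assoc, mul_comm c]
    rw [zpow_mul_pow_pow_of_odd hs hk hk_dvd horder, hyk, ← zpow_add, ← add_mul,
      ← orderOf_dvd_iff_zpow_eq_one, hx, Nat.cast_mul,
      mul_dvd_mul_iff_right (Nat.cast_ne_zero.2 hk.pos.ne')]
  have hs_dvd (a : ℤ) (b : ℕ) (hab : (x ^ a * y ^ b) ^ k = 1) : s ∣ b := by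
    rw [zpow_mul_pow_pow h, mul_eq_one_iff_eq_inv'] at hab
    have hmem : y ^ (b * k) ∈ zpowers x := hab ▸ inv_mem (zpow_mem_zpowers x _)
    rw [pow_mem_zpowers_iff_index_dvd h hgen, hindex] at hmem
    exact Nat.dvd_of_mul_dvd_mul_right hk.pos hmem
  rw [← zpow_natCast x t, ← zpow_neg]
  apply le_antisymm <;> rw [omega1Grp, closure_le]
  · intro g hg
    obtain ⟨a, b, rfl⟩ := exists_eq_zpow_mul_pow h hgen g
    obtain ⟨c, rfl⟩ := hs_dvd a b hg
    rw [pow_mul] at hg ⊢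
    exact zpow_mul_pow_mem_closure_pair hs hr_dvd ((hpow a c).1 hg)
  · rw [Set.pair_subset_iff]
    constructor <;> apply mem_closure_of_mem
    · simpa using (hpow r 0).2 (by simp)
    · simpa using (hpow (-t) 1).2 (by simp)

end Metacyclic

theorem stmt13 (p l m n q : ℕ) [Fact p.Prime] (hodd : Odd p)
    (hl : 0 < l) (hm : 0 < m) (hn : 0 < n) (hq : 0 < q)
    (hlm : l ≤ m) (hqm : q ≤ m) (hmln : m ≤ l + n) (hmql : m ≤ q + l)
    (hmod : (1 + p ^ l) ^ p ^ n ≡ 1 [MOD p ^ m])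
    (S : Type*) [Group S] [Fintype S] (hcard : Nat.card S = p ^ (m + n))
    (x y : S) (hgen : Subgroup.closure {x, y} = ⊤)
    (hx : orderOf x = p ^ m) (hxy : y ^ p ^ n = x ^ p ^ q)
    (hconj : y * x * y⁻¹ = x ^ (1 + p ^ l)) :
    Subgroup.center S = Subgroup.closure {x ^ p ^ (m - l), y ^ p ^ (m - l)} ∧
      omega1Grp p S =
        Subgroup.closure {x ^ p ^ (m - 1), (x ^ p ^ (q - 1))⁻¹ * y ^ p ^ (n - 1)} ∧
      (q = m → omega1Grp p S = Subgroup.closure {x ^ p ^ (m - 1), y ^ p ^ (n - 1)}) := by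
  have hp : p ≠ 0 := (Fact.out : p.Prime).ne_zero
  have hsemi : SemiconjBy y x (x ^ (1 + (p : ℤ) ^ l)) := by
    rw [SemiconjBy, ← mul_inv_eq_iff_eq_mul, hconj]
    exact_mod_cast (zpow_natCast x (1 + p ^ l)).symm
  have hlte := pow_dvd_one_add_pow_pow_sub_one_iff hodd hl
  have hindex : (zpowers x).index = p ^ n := by
    rw [← Nat.mul_right_inj (pow_ne_zero m hp), ← pow_add, ← hcard, ← hx, ← Nat.card_zpowers,
      card_mul_index]
  have hcenter : center S = closure {x ^ p ^ (m - l), y ^ p ^ (m - l)} := by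
    apply center_eq_closure_pair hsemi hgen
    · simp [hx, pow_dvd_pow_mul_iff (Nat.cast_ne_zero.2 hp : (p : ℤ) ≠ 0) hlm]
    · simp [hx, hlte]
  have homega : omega1Grp p S =
      closure {x ^ p ^ (m - 1), (x ^ p ^ (q - 1))⁻¹ * y ^ p ^ (n - 1)} := by
    apply omega1Grp_eq_closure_pair hsemi hgen hodd
    · rw [hx, pow_sub_one_mul hm.ne']
    · rw [hindex, pow_sub_one_mul hn.ne']
    · rw [pow_sub_one_mul hn.ne', pow_sub_one_mul hq.ne', hxy]
    · simpa [Nat.sub_eq_zero_of_le hl] using hlte 1 (p ^ (n - 1))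
    · simpa [hlte] using pow_dvd_pow p (by lia : m - 1 - l ≤ n - 1)
  exact ⟨hcenter, homega, by rintro rfl; rw [homega, closure_pair_inv_mul]⟩
end

section
/- Let p be an odd prime, let G be a finite group, and let S be a Sylow p-subgroup of G that is nonabelian split metacyclic. Then the quotient N_G(S)/(S·C_G(S)) is cyclic of order dividing p − 1. Moreover, for every nontrivial characteristic subgroup Q of S one has N_G(Q) = N_G(S)·C_G(Q), and the natural homomorphism N_G(S)/C_G(S) → N_G(Q)/C_G(Q) induced by inclusion is surjective. -/
open Subgroup Pointwise

/-- A `p`-group is split metacyclic if it is the internal semidirect product of a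
cyclic normal subgroup by a cyclic subgroup. -/
def IsSplitMetacyclic (H : Type*) [Group H] : Prop :=
  ∃ C K : Subgroup H, ∃ _ : C.Normal,
    IsCyclic C ∧ IsCyclic K ∧ C ⊓ K = ⊥ ∧ C ⊔ K = ⊤

/-- `S·C_G(S)` is a normal subgroup of `N_G(S)`. -/
instance normalSC {G : Type*} [Group G] (H : Subgroup G) :
    ((H ⊔ Subgroup.centralizer (H : Set G)).subgroupOf (Subgroup.normalizer (H : Set G))).Normal := by
  have hconjH : ∀ g ∈ Subgroup.normalizer (H : Set G), ∀ h ∈ H, g * h * g⁻¹ ∈ H := fun g hg h hh =>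
    (Subgroup.mem_normalizer_iff.mp hg h).mp hh
  have hconjC : ∀ g ∈ Subgroup.normalizer (H : Set G), ∀ c ∈ Subgroup.centralizer (H : Set G),
      g * c * g⁻¹ ∈ Subgroup.centralizer (H : Set G) := by
    intro g hg c hc
    rw [Subgroup.mem_centralizer_iff] at hc ⊢
    intro h hh
    have hh' : g⁻¹ * h * g ∈ H := by
      have := (Subgroup.mem_normalizer_iff.mp ((Subgroup.normalizer (H : Set G)).inv_mem hg) h).mp hh
      simpa using this
    have hc' := hc _ hh'
    have e : h * (g * c * g⁻¹) = g * (g⁻¹ * h * g * c) * g⁻¹ := by group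
    rw [e, hc']
    group
  constructor
  rintro ⟨m, hmN⟩ hm ⟨n, hnN⟩
  rw [Subgroup.mem_subgroupOf] at hm ⊢
  have key : n * m * n⁻¹ ∈ H ⊔ Subgroup.centralizer (H : Set G) := by
    have hsup : H ⊔ Subgroup.centralizer (H : Set G) =
        Subgroup.closure ((H : Set G) ∪ (Subgroup.centralizer (H : Set G) : Set G)) := by
      rw [Subgroup.closure_union, Subgroup.closure_eq, Subgroup.closure_eq]
    rw [hsup] at hm ⊢
    refine Subgroup.closure_induction
      (p := fun x _ => n * x * n⁻¹ ∈
        Subgroup.closure ((H : Set G) ∪ (Subgroup.centralizer (H : Set G) : Set G)))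
      ?_ ?_ ?_ ?_ hm
    · rintro x (hx | hx)
      · exact Subgroup.subset_closure (Or.inl (hconjH n hnN x hx))
      · exact Subgroup.subset_closure (Or.inr (hconjC n hnN x hx))
    · simpa using Subgroup.one_mem _
    · intro x y _ _ hx hy
      have := Subgroup.mul_mem _ hx hy
      have e : n * x * n⁻¹ * (n * y * n⁻¹) = n * (x * y) * n⁻¹ := by group
      rwa [e] at this
    · intro x _ hx
      have := Subgroup.inv_mem _ hx
      have e : (n * x * n⁻¹)⁻¹ = n * x⁻¹ * n⁻¹ := by group
      rwa [e] at this
  simpa using key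

/-!
Write `Z = Ω₁(S')`. As `p` is odd, taking `p ^ k`-th powers is multiplicative on the elements of
order dividing `p ^ (k + 1)` in `S`, so an automorphism of prime order `q ≠ p` which fixes the
elements of order `p` of a subgroup it preserves fixes that subgroup pointwise. If `S` is
nonabelian then `Z` is central of order `p`, and an automorphism of prime order `q ≠ p` of `S`
fixing `Z` fixes `S'` pointwise and a generator of `S` modulo `S'` as well, which makes it
trivial. Hence `N(S) ∩ C(Z) = S C(S)`, and the quotient embeds into `Aut Z`, which is cyclic of
order `p - 1`.

Let `Q` be normal in `S` and `g ∈ N(Q)`. If `g` normalizes a subgroup `L ≤ Ω₁(Q)` centralized by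
`S` and containing `[S, Ω₁(Q)]`, then `S` acts on `Q` through the stabilizer of the chain `1 ≤ L ≤
Ω₁(Q)`, a `p`-group of automorphisms normalized by `g`, and the Frattini argument yields `n ∈
N(S)` with the same action on `Q` as `g`. If `S` centralizes `Ω₁(Q)` take `L = 1`; otherwise
`Ω₁(Q) = Ω₁(S)` has rank two, and `L = Z` works provided `g` normalizes `Z`. If it did not, `S`
and its conjugate by `g` would induce opposite transvections on `Ω₁(S)`. These generate `-1`,
which the Frattini argument realizes inside `N(S)`; but an automorphism of `S` inverting `Ω₁(S)`
forces `S` to be abelian.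
-/

/-! ### Coprime automorphisms -/

theorem eq_top_of_sup_commutator_eq_top {P : Type*} [Group P] [Finite P] [Group.IsNilpotent P]
    {H : Subgroup P} (h : H ⊔ commutator P = ⊤) : H = ⊤ := by
  by_contra hH
  obtain ⟨M, hM, hHM⟩ := (eq_top_or_exists_le_coatom H).resolve_left hH
  have hMnormal : M.Normal := Group.normalizerCondition_of_isNilpotent.normal_of_coatom M hM
  have : Nontrivial (P ⧸ M) := QuotientGroup.nontrivial_iff.mpr hM.1
  refine (Group.IsSolvable.commutator_lt_top_of_nontrivial (P ⧸ M)).ne ?_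
  have hsurj := QuotientGroup.mk'_surjective M
  calc commutator (P ⧸ M)
      = H.map (QuotientGroup.mk' M) ⊔ (commutator P).map (QuotientGroup.mk' M) := by
        rw [(Subgroup.map_eq_bot_iff H).mpr (by simpa using hHM), bot_sup_eq, commutator_def,
          commutator_def, map_commutator, map_top_of_surjective _ hsurj]
    _ = ⊤ := by rw [← Subgroup.map_sup, h, map_top_of_surjective _ hsurj]

theorem isPGroup_of_forall_pow_prime_eq_one {p : ℕ} {B : Type*} [Group B] [Finite B]
    (h : ∀ q : ℕ, q.Prime → q ≠ p → ∀ b : B, b ^ q = 1 → b = 1) : IsPGroup p B := by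
  refine IsPGroup.of_card (Nat.eq_prime_pow_of_unique_prime_dvd Nat.card_pos.ne' ?_)
  intro q hq hdvd
  have : Fact q.Prime := ⟨hq⟩
  obtain ⟨b, hb⟩ := exists_prime_orderOf_dvd_card' q hdvd
  by_contra hqp
  have hb1 : b = 1 := h q hq hqp b (hb ▸ pow_orderOf_eq_one b)
  exact hq.one_lt.ne (by rw [← hb, hb1, orderOf_one])

theorem mem_of_zpow_mem_of_not_dvd {P : Type*} [Group P] {p : ℕ} [hp : Fact p.Prime]
    (hP : IsPGroup p P) {H : Subgroup P} {b : P} {l : ℤ} (hl : ¬ (p : ℤ) ∣ l)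
    (h : b ^ l ∈ H) : b ∈ H := by
  obtain ⟨k, hk⟩ := IsPGroup.iff_orderOf.mp hP b
  have hcop : l.gcd (orderOf b) = 1 := by
    rw [hk, Nat.cast_pow, ← Int.isCoprime_iff_gcd_eq_one]
    exact (((Nat.prime_iff_prime_int.mp hp.out).coprime_iff_not_dvd.mpr hl).pow_left).symm
  exact zpowers_le.mpr h (mem_zpowers_zpow_iff.mpr hcop)

section CoprimeAutomorphism

variable {P : Type*} [Group P] {p q : ℕ} {φ : MulAut P}

theorem mulAut_pow_apply_of_fixed {x w : P} (hx : φ x = x * w) (hw : φ w = w) (n : ℕ) :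
    (φ ^ n) x = x * w ^ n := by
  induction n with
  | zero => simp
  | succ n ih =>
    rw [pow_succ', MulAut.mul_apply, ih, map_mul, map_pow, hx, hw, mul_assoc, pow_succ']

theorem fixed_of_fixed_inv_mul [hp : Fact p.Prime] (hq : q.Prime) (hqp : q ≠ p) (hφ : φ ^ q = 1)
    (hP : IsPGroup p P) {x : P}
    (hx : φ (x⁻¹ * φ x) = x⁻¹ * φ x) : φ x = x := by
  have hpow : (φ ^ q) x = x * (x⁻¹ * φ x) ^ q :=
    mulAut_pow_apply_of_fixed (mul_inv_cancel_left x (φ x)).symm hx q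
  have hcop : p.Coprime q := (Nat.coprime_primes hp.out hq).mpr hqp.symm
  have hone : (x⁻¹ * φ x) ^ q = 1 ^ q := by simpa [hφ] using hpow
  exact (inv_mul_eq_one.mp ((hP.powEquiv hcop).injective hone)).symm

theorem exists_fixed_mul [Finite P] [hp : Fact p.Prime] (hq : q.Prime) (hqp : q ≠ p)
    (hφ : φ ^ q = 1) {W : Subgroup P} (hpW : IsPGroup p W) (hW : ∀ w, φ w ∈ W ↔ w ∈ W)
    {x : P} (hx : x⁻¹ * φ x ∈ W) : ∃ w ∈ W, φ (x * w) = x * w := by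
  have hinv : ∀ y, MulAut.toPerm P φ y ∈ x • (W : Set P) ↔ y ∈ x • (W : Set P) := fun y => by
    have hsplit : x⁻¹ * φ y = x⁻¹ * φ x * φ (x⁻¹ * y) := by simp [mul_assoc]
    rw [mem_leftCoset_iff, mem_leftCoset_iff]
    change x⁻¹ * φ y ∈ W ↔ _
    rw [hsplit]
    exact (W.mul_mem_cancel_left hx).trans (hW _)
  let σ : Equiv.Perm (x • (W : Set P) : Set P) := (MulAut.toPerm P φ).subtypePerm hinv
  have hσ : σ ^ q ^ 1 = 1 := by
    have hφq : MulAut.toPerm P φ ^ q = 1 := by rw [← map_pow, hφ, map_one]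
    rw [pow_one]
    ext y
    exact (congrArg Subtype.val (Equiv.congr_fun (Equiv.Perm.subtypePerm_pow _ q hinv) y)).trans
      (Equiv.congr_fun hφq y)
  have := Fintype.ofFinite (x • (W : Set P) : Set P)
  have hcard : ¬ q ∣ Fintype.card (x • (W : Set P) : Set P) := by
    obtain ⟨n, hn⟩ := IsPGroup.iff_card.mp hpW
    rw [← Nat.card_eq_fintype_card, Nat.card_congr (leftCosetEquivSubgroup x), hn]
    exact fun h => hqp ((Nat.prime_dvd_prime_iff_eq hq hp.out).mp (hq.dvd_of_dvd_pow h))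
  have : Fact q.Prime := ⟨hq⟩
  obtain ⟨⟨_, w, hw, rfl⟩, hfix⟩ := Equiv.Perm.exists_fixed_point_of_prime hcard hσ
  exact ⟨w, hw, congrArg Subtype.val hfix⟩

theorem eq_top_of_mul_mem_of_mem_centralizer [Finite P] [hp : Fact p.Prime] (hP : IsPGroup p P)
    {F : Subgroup P} {x b y : P} (hgen : closure {x, b} = ⊤) (hxb : ¬ Commute x b)
    (hxF : x ∈ F) (hF : commutator P ≤ F) (hy : y ∈ centralizer {x}) (hby : b * y ∈ F) :
    F = ⊤ := by
  let M := zpowers x ⊔ commutator P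
  let T := centralizer {x} ⊔ commutator P
  have hMF : M ≤ F := sup_le (zpowers_le.mpr hxF) hF
  have hMT : M ≤ T := sup_le_sup_right (zpowers_le.mpr (mem_centralizer_singleton_iff.mpr rfl)) _
  have hM : M.Normal := Normal.of_commutator_le P le_sup_right
  have hMb : zpowers b ⊔ M = ⊤ := by
    rw [eq_top_iff, ← hgen, closure_le]
    rintro z (rfl | rfl)
    · exact le_sup_right (a := zpowers b) (mem_sup_left (mem_zpowers z))
    · exact mem_sup_left (mem_zpowers z)
  obtain ⟨_, ⟨l, rfl⟩, m, hm, hlm⟩ := mem_sup_of_normal_right.mp (hMb ▸ mem_top y)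
  have hbl : b ^ l = y * m⁻¹ := eq_mul_inv_of_mul_eq hlm
  by_cases hl : (p : ℤ) ∣ l
  · have hl1 : ¬ (p : ℤ) ∣ l + 1 := fun h =>
      (Nat.prime_iff_prime_int.mp hp.out).not_dvd_one ((Int.dvd_add_right hl).mp h)
    have hbF : b ^ (l + 1) ∈ F := by
      rw [zpow_add_one, (Commute.refl b).zpow_left l |>.eq, hbl, ← mul_assoc]
      exact mul_mem hby (inv_mem (hMF hm))
    rw [eq_top_iff, ← hgen, closure_le, Set.pair_subset_iff]
    exact ⟨hxF, mem_of_zpow_mem_of_not_dvd hP hl1 hbF⟩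
  · have hbT : b ∈ T := mem_of_zpow_mem_of_not_dvd hP hl
      (hbl ▸ mul_mem (mem_sup_left hy) (inv_mem (hMT hm)))
    have hT : T = ⊤ := by
      rw [eq_top_iff, ← hgen, closure_le, Set.pair_subset_iff]
      exact ⟨hMT (mem_sup_left (mem_zpowers x)), hbT⟩
    have := hP.isNilpotent
    have hb : b ∈ centralizer {x} := eq_top_of_sup_commutator_eq_top hT ▸ mem_top b
    exact absurd (mem_centralizer_singleton_iff.mp hb).symm hxb

theorem eq_one_of_fixes_commutator [Finite P] [hp : Fact p.Prime] (hq : q.Prime) (hqp : q ≠ p)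
    (hφ : φ ^ q = 1) (hP : IsPGroup p P) {x b : P} (hgen : closure {x, b} = ⊤)
    (hxb : ¬ Commute x b) (hφx : φ x = x) (hφcomm : ∀ c ∈ commutator P, φ c = c) : φ = 1 := by
  have hconj : φ (b * x * b⁻¹) = b * x * b⁻¹ := by
    have hcomm := hφcomm _ (commutator_mem_commutator (mem_top b) (mem_top x))
    rw [← inv_mul_cancel_right (b * x * b⁻¹) x, ← commutatorElement_def, map_mul, hcomm, hφx]
  have hfix : b⁻¹ * φ b ∈ centralizer {x} := by
    rw [map_mul, map_mul, map_inv, hφx] at hconj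
    rw [mem_centralizer_singleton_iff]
    calc b⁻¹ * φ b * x = b⁻¹ * (φ b * x * (φ b)⁻¹) * φ b := by group
      _ = x * (b⁻¹ * φ b) := by rw [hconj]; group
  have hcent : ∀ w, φ w ∈ centralizer {x} ↔ w ∈ centralizer {x} := fun w => by
    rw [mem_centralizer_singleton_iff, mem_centralizer_singleton_iff]
    nth_rw 1 [← hφx]
    nth_rw 2 [← hφx]
    rw [← map_mul, ← map_mul, φ.apply_eq_iff_eq]
  obtain ⟨y, hyx, hby⟩ := exists_fixed_mul hq hqp hφ (hP.to_subgroup _) hcent hfix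
  have hF := eq_top_of_mul_mem_of_mem_centralizer
    (F := φ.toMonoidHom.eqLocus (MonoidHom.id P)) hP hgen hxb hφx hφcomm hyx hby
  ext z
  exact (hF ▸ mem_top z : z ∈ φ.toMonoidHom.eqLocus (MonoidHom.id P))

end CoprimeAutomorphism

/-! ### Regular powers and chain stabilizers -/

section OmegaRegular

/-- `P` is `Ω`-regular at `p`: on the elements of order dividing `p ^ (k + 1)` the map
`x ↦ x ^ p ^ k` is multiplicative, for every `k`. This is the part of P. Hall's regularity that
makes the elements of order dividing `p ^ k` a subgroup; being universally quantified, it passes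
to subgroups. -/
def IsOmegaRegular (p : ℕ) (P : Type*) [Group P] : Prop :=
  ∀ (k : ℕ) (x y : P), x ^ p ^ (k + 1) = 1 → y ^ p ^ (k + 1) = 1 →
    (x * y) ^ p ^ k = x ^ p ^ k * y ^ p ^ k

/-- The subgroup `Ω_n(P)` generated by the elements of order dividing `p ^ n`. -/
def omega (p n : ℕ) (P : Type*) [Group P] : Subgroup P := closure {x | x ^ p ^ n = 1}

variable {P Q : Type*} [Group P] [Group Q] {p : ℕ} {n : ℕ}

theorem IsOmegaRegular.of_injective (h : IsOmegaRegular p P) {f : Q →* P}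
    (hf : Function.Injective f) : IsOmegaRegular p Q := by
  intro k x y hx hy
  apply hf
  simpa only [map_mul, map_pow] using
    h k (f x) (f y) (by rw [← map_pow, hx, map_one]) (by rw [← map_pow, hy, map_one])

theorem mem_omega_of_pow_eq_one {x : P} (hx : x ^ p ^ n = 1) : x ∈ omega p n P :=
  subset_closure hx

instance omega_characteristic : (omega p n P).Characteristic := by
  refine characteristic_iff_map_le.mpr fun φ => ?_
  rw [omega, MonoidHom.map_closure, closure_le]
  rintro _ ⟨x, hx, rfl⟩
  have hx1 : x ^ p ^ n = 1 := hx
  exact mem_omega_of_pow_eq_one (by rw [← map_pow, hx1, map_one])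

theorem IsOmegaRegular.mem_omega (h : IsOmegaRegular p P) {x : P} :
    x ∈ omega p n P ↔ x ^ p ^ n = 1 := by
  refine ⟨fun hx => ?_, mem_omega_of_pow_eq_one⟩
  induction hx using closure_induction with
  | mem _ hx => exact hx
  | one => exact one_pow _
  | mul x y _ _ hx hy =>
    rw [h n x y (by rw [pow_succ, pow_mul, hx, one_pow]) (by rw [pow_succ, pow_mul, hy, one_pow]),
      hx, hy, one_mul]
  | inv x _ hx => rw [inv_pow, hx, inv_one]

theorem IsOmegaRegular.mem_omega_one (h : IsOmegaRegular p P) {x : P} :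
    x ∈ omega p 1 P ↔ x ^ p = 1 := by
  rw [h.mem_omega, pow_one]

variable {q : ℕ} {φ : MulAut P}

theorem IsOmegaRegular.fixed_of_fixed_omega [Fact p.Prime] (h : IsOmegaRegular p P)
    (hP : IsPGroup p P) (hq : q.Prime) (hqp : q ≠ p) (hφ : φ ^ q = 1) {H : Subgroup P}
    (hH : ∀ x ∈ H, φ x ∈ H) (hfix : ∀ x ∈ H, x ^ p = 1 → φ x = x) : ∀ x ∈ H, φ x = x := by
  have key : ∀ k : ℕ, ∀ x ∈ H, x ^ p ^ k = 1 → φ x = x := by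
    intro k
    induction k with
    | zero => intro x _ hx; rw [show x = 1 by simpa using hx, map_one]
    | succ k ih =>
      intro x hxH hx
      have hxk : φ (x ^ p ^ k) = x ^ p ^ k :=
        hfix _ (pow_mem hxH _) (by rw [← pow_mul, ← pow_succ, hx])
      have hφx : φ x ^ p ^ (k + 1) = 1 := by rw [← map_pow, hx, map_one]
      refine fixed_of_fixed_inv_mul hq hqp hφ hP (ih _ (mul_mem (inv_mem hxH) (hH x hxH)) ?_)
      rw [h k _ _ (by rw [inv_pow, hx, inv_one]) hφx, inv_pow, ← map_pow, hxk, inv_mul_cancel]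
  exact fun x hx => (hP x).elim fun k hk => key k x hx hk

/-- The automorphisms of `P` stabilizing the chain `1 ≤ L ≤ V`: those that act trivially on `L`
and induce the identity on the cosets `V / L`. -/
def chainStabilizer (L V : Subgroup P) : Subgroup (MulAut P) where
  carrier := {φ | (∀ l ∈ L, φ l = l) ∧ ∀ v ∈ V, v⁻¹ * φ v ∈ L}
  one_mem' := ⟨fun _ _ => rfl, fun v _ => by simp⟩
  mul_mem' {φ ψ} hφ hψ := by
    refine ⟨fun l hl => by rw [MulAut.mul_apply, hψ.1 l hl, hφ.1 l hl], fun v hv => ?_⟩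
    have : v⁻¹ * (φ * ψ) v = (v⁻¹ * φ v) * φ (v⁻¹ * ψ v) := by simp [mul_assoc]
    rw [this, hφ.1 _ (hψ.2 v hv)]
    exact mul_mem (hφ.2 v hv) (hψ.2 v hv)
  inv_mem' {φ} hφ := by
    have hinv : ∀ l ∈ L, φ⁻¹ l = l := fun l hl => by
      rw [MulAut.inv_apply, MulEquiv.symm_apply_eq, hφ.1 l hl]
    refine ⟨hinv, fun v hv => ?_⟩
    have : v⁻¹ * φ⁻¹ v = φ⁻¹ (v⁻¹ * φ v)⁻¹ := by simp
    rw [this, hinv _ (inv_mem (hφ.2 v hv))]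
    exact inv_mem (hφ.2 v hv)

theorem stabilizer_inf_stabilizer_le_normalizer_chainStabilizer (L V : Subgroup P) :
    MulAction.stabilizer (MulAut P) L ⊓ MulAction.stabilizer (MulAut P) V ≤
      normalizer (chainStabilizer L V : Set (MulAut P)) := by
  refine le_normalizer_iff.mpr fun φ hφ ψ hψ => ⟨fun l hl => ?_, fun v hv => ?_⟩
  · have hl' : φ⁻¹ l ∈ L := (inv_mem hφ).1 ▸ smul_mem_pointwise_smul l φ⁻¹ L hl
    rw [MulAut.mul_apply, MulAut.mul_apply, hψ.1 _ hl', MulAut.apply_inv_self]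
  · have hv' : φ⁻¹ v ∈ V := (inv_mem hφ).2 ▸ smul_mem_pointwise_smul v φ⁻¹ V hv
    have hconj : v⁻¹ * (φ * ψ * φ⁻¹) v = φ ((φ⁻¹ v)⁻¹ * ψ (φ⁻¹ v)) := by simp
    rw [hconj]
    exact hφ.1 ▸ smul_mem_pointwise_smul _ φ L (hψ.2 _ hv')

theorem IsOmegaRegular.isPGroup_chainStabilizer [Finite P] [Fact p.Prime]
    (h : IsOmegaRegular p P) (hP : IsPGroup p P) (L : Subgroup P) :
    IsPGroup p (chainStabilizer L (omega p 1 P)) := by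
  refine isPGroup_of_forall_pow_prime_eq_one fun q hq hqp φ hφ => ?_
  have hφq : (φ : MulAut P) ^ q = 1 := congrArg Subtype.val hφ
  have hfix : ∀ x ∈ (⊤ : Subgroup P), (φ : MulAut P) x = x :=
    h.fixed_of_fixed_omega hP hq hqp hφq (fun _ _ => mem_top _) fun v _ hv =>
      fixed_of_fixed_inv_mul hq hqp hφq hP (φ.2.1 _ (φ.2.2 v (h.mem_omega_one.mpr hv)))
  ext x
  exact hfix x (mem_top x)

theorem eq_one_of_fixed_of_inverts_omega (hp : Odd p) (hP : IsPGroup p P)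
    (hφ : ∀ x : P, x ^ p = 1 → φ x = x⁻¹) {x : P} (hx : φ x = x) : x = 1 := by
  have hfixed : ∀ y : P, φ y = y → y ^ p = 1 → y = 1 := fun y hy hyp => by
    have hy2 : y ^ 2 = 1 := by
      rw [pow_two, ← mul_inv_cancel y, ← hφ y hyp, hy]
    rw [← pow_one y, ← (Nat.coprime_two_left.mpr hp : Nat.gcd 2 p = 1)]
    exact pow_gcd_eq_one.mpr ⟨hy2, hyp⟩
  have key : ∀ k : ℕ, x ^ p ^ k = 1 → x = 1 := by
    intro k
    induction k with
    | zero => simp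
    | succ k ih =>
      exact fun hk => ih (hfixed _ (by rw [map_pow, hx]) (by rw [← pow_mul, ← pow_succ, hk]))
  exact (hP x).elim key

theorem IsOmegaRegular.commute_of_inverts_omega [Finite P] [Fact p.Prime] (hp : Odd p)
    (h : IsOmegaRegular p P) (hP : IsPGroup p P) (hφ : ∀ x : P, x ^ p = 1 → φ x = x⁻¹) (x y : P) :
    Commute x y := by
  have hpow : ∀ m : ℕ, ∀ z : P, z ^ p = 1 → (φ ^ m) z = z ^ (-1 : ℤ) ^ m := by
    intro m z hz
    induction m with
    | zero => simp
    | succ m ih =>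
      rw [pow_succ', MulAut.mul_apply, ih, map_zpow, hφ z hz, inv_zpow', pow_succ', neg_one_mul]
  have hφ2 : φ ^ 2 ∈ chainStabilizer ⊥ (omega p 1 P) := by
    refine ⟨fun l hl => by rw [mem_bot.mp hl, map_one], fun v hv => ?_⟩
    rw [mem_bot, inv_mul_eq_one, hpow 2 v (h.mem_omega_one.mp hv), neg_one_sq, zpow_one]
  obtain ⟨j, hj⟩ := h.isPGroup_chainStabilizer hP ⊥ ⟨φ ^ 2, hφ2⟩
  have hinvol : Function.Involutive (φ ^ p ^ j) := fun z => by
    have hφj : (φ ^ p ^ j) ^ 2 = 1 := by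
      rw [← pow_mul, mul_comm, pow_mul]
      exact congrArg Subtype.val hj
    rw [← MulAut.mul_apply, ← pow_two, hφj, MulAut.one_apply]
  have hinv : ∀ z : P, z ^ p = 1 → (φ ^ p ^ j) z = z⁻¹ := fun z hz => by
    rw [hpow _ z hz, hp.pow.neg_one_pow, zpow_neg_one]
  exact MonoidHom.FixedPointFree.commute_all_of_involutive (φ := φ ^ p ^ j)
    (fun z hz => eq_one_of_fixed_of_inverts_omega hp hP hinv hz) hinvol x y

end OmegaRegular

/-! ### Split metacyclic groups -/

theorem mem_zpowers_of_pow_orderOf_eq_one {A : Type*} [Group A] [Finite A] [IsCyclic A] {z c : A}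
    (h : c ^ orderOf z = 1) : c ∈ zpowers z := by
  classical
  have := Fintype.ofFinite A
  have hsub : (zpowers z : Set A) ⊆ {x | x ^ orderOf z = 1} := by
    rintro _ ⟨l, rfl⟩
    change (z ^ l) ^ orderOf z = 1
    rw [← zpow_natCast, zpow_comm, zpow_natCast, pow_orderOf_eq_one, one_zpow]
  have hcard : {x : A | x ^ orderOf z = 1}.ncard ≤ (zpowers z : Set A).ncard := by
    have := IsCyclic.card_pow_eq_one_le (α := A) (orderOf_pos z)
    rw [Set.ncard_eq_toFinset_card', ← Nat.card_coe_set_eq, SetLike.coe_sort_coe, Nat.card_zpowers]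
    simpa using this
  have heq := Set.eq_of_subset_of_ncard_le hsub hcard
  exact (heq ▸ h : c ∈ (zpowers z : Set A))

theorem mem_zpowers_of_mem_of_pow_orderOf_eq_one {G : Type*} [Group G] [Finite G] {A : Subgroup G}
    [IsCyclic A] {z c : G} (hz : z ∈ A) (hc : c ∈ A) (h : c ^ orderOf z = 1) : c ∈ zpowers z := by
  have hc' : (⟨c, hc⟩ : A) ∈ zpowers (⟨z, hz⟩ : A) :=
    mem_zpowers_of_pow_orderOf_eq_one (Subtype.ext (by simpa using h))
  obtain ⟨l, hl⟩ := hc'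
  exact ⟨l, congrArg Subtype.val hl⟩

theorem isMulCommutative_of_closure_pair_eq_top {P : Type*} [Group P] {x y : P}
    (h : closure {x, y} = ⊤) (hxy : Commute x y) : IsMulCommutative P := by
  have hcomm : ∀ u ∈ ({x, y} : Set P), ∀ v ∈ ({x, y} : Set P), u * v = v * u := by
    rintro u (rfl | rfl) v (rfl | rfl)
    exacts [rfl, hxy, hxy.symm, rfl]
  have hclosure := isMulCommutative_closure hcomm
  rw [h] at hclosure
  exact ⟨⟨fun u v => setLike_mul_comm (mem_top u) (mem_top v)⟩⟩

theorem dvd_sub_one_of_dvd_pow_prime_pow_sub_one {p : ℕ} [Fact p.Prime] {m : ℤ} {n : ℕ}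
    (h : (p : ℤ) ∣ m ^ p ^ n - 1) : (p : ℤ) ∣ m - 1 := by
  rw [← ZMod.intCast_zmod_eq_zero_iff_dvd] at h ⊢
  simpa only [Int.cast_sub, Int.cast_pow, ZMod.pow_card_pow] using h

theorem mul_pow_eq_of_conj_eq_zpow {P : Type*} [Group P] {y c : P} {r : ℤ}
    (hy : y⁻¹ * c * y = c ^ r) (l : ℕ) :
    (y * c) ^ l = y ^ l * c ^ (∑ i ∈ Finset.range l, r ^ i) := by
  induction l with
  | zero => simp
  | succ l ih =>
    have hconj (s : ℤ) : c ^ s * y = y * c ^ (r * s) := by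
      rw [zpow_mul, ← hy]
      simpa [mul_assoc] using congrArg (y * ·) (conj_zpow (a := y⁻¹) (b := c) (i := s)).symm
    rw [pow_succ, ih, mul_assoc, ← mul_assoc (c ^ _), hconj, geom_sum_succ, zpow_add_one, pow_succ]
    simp only [mul_assoc]

theorem exists_mul_pow_prime {P : Type*} [Group P] {p : ℕ} (hodd : Odd p) {y c : P} {σ : ℤ}
    (hy : y⁻¹ * c * y = c ^ (1 + p * σ)) :
    ∃ t : ℤ, (y * c) ^ p = y ^ p * c ^ (p * (1 + p * t)) := by
  obtain ⟨t, ht⟩ := @odd_sq_dvd_geom_sum₂_sub ℤ _ 1 σ p hodd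
  refine ⟨t, ?_⟩
  rw [mul_pow_eq_of_conj_eq_zpow hy]
  congr 2
  simp only [one_pow, mul_one] at ht
  linear_combination ht

/-- `C` and `K` exhibit the ambient group as the internal semidirect product `C ⋊ K` of a cyclic
normal subgroup by a cyclic subgroup. -/
structure IsMetacyclicSplitting {P : Type*} [Group P] (C K : Subgroup P) : Prop where
  normal : C.Normal
  isCyclic_left : IsCyclic C
  isCyclic_right : IsCyclic K
  inf_eq_bot : C ⊓ K = ⊥
  sup_eq_top : C ⊔ K = ⊤

namespace IsMetacyclicSplitting

variable {P : Type*} [Group P] {C K : Subgroup P}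

theorem exists_mul_eq (h : IsMetacyclicSplitting C K) (x : P) : ∃ k ∈ K, ∃ c ∈ C, k * c = x := by
  have := h.normal
  exact mem_sup_of_normal_right.mp (sup_comm C K ▸ h.sup_eq_top ▸ mem_top x)

theorem eq_one_of_mul_eq_one (h : IsMetacyclicSplitting C K) {k c : P} (hk : k ∈ K) (hc : c ∈ C)
    (hkc : k * c = 1) : k = 1 ∧ c = 1 := by
  have hkC : k ∈ C ⊓ K := ⟨eq_inv_of_mul_eq_one_left hkc ▸ C.inv_mem hc, hk⟩
  rw [h.inf_eq_bot, mem_bot] at hkC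
  exact ⟨hkC, by rwa [hkC, one_mul] at hkc⟩

theorem commutator_le (h : IsMetacyclicSplitting C K) : commutator P ≤ C := by
  have := h.normal
  have := h.isCyclic_right
  exact h.normal.commutator_le_of_self_sup_commutative_eq_top h.sup_eq_top inferInstance

variable {p : ℕ} [hp : Fact p.Prime]

theorem exists_conj_eq_zpow (h : IsMetacyclicSplitting C K) (hP : IsPGroup p P) (y : P) :
    ∃ σ : ℤ, ∀ c ∈ C, y⁻¹ * c * y = c ^ (1 + p * σ) := by
  have := h.normal
  have := h.isCyclic_left
  obtain ⟨m, hm⟩ := MonoidHom.map_cyclic (MulAut.conjNormal (H := C) y⁻¹).toMonoidHom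
  have hconj : ∀ c ∈ C, y⁻¹ * c * y = c ^ m := fun c hc => by
    simpa using congrArg Subtype.val (hm ⟨c, hc⟩)
  by_cases hC : ∀ c ∈ C, c = 1
  · exact ⟨0, fun c hc => by simp [hC c hc]⟩
  obtain ⟨c, hc, hc1⟩ : ∃ c ∈ C, c ≠ 1 := by simpa using hC
  have hconj_pow : ∀ n : ℕ, (y ^ n)⁻¹ * c * y ^ n = c ^ m ^ n := by
    intro n
    induction n with
    | zero => simp
    | succ n ih =>
      calc (y ^ (n + 1))⁻¹ * c * y ^ (n + 1) = y⁻¹ * ((y ^ n)⁻¹ * c * y ^ n) * y := by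
            rw [pow_succ]; group
        _ = c ^ m ^ (n + 1) := by rw [ih, hconj _ (zpow_mem hc _), ← zpow_mul, pow_succ]
  obtain ⟨n, hn⟩ := hP y
  have hdvd : (orderOf c : ℤ) ∣ m ^ p ^ n - 1 := by
    rw [orderOf_dvd_iff_zpow_eq_one, zpow_sub_one, ← hconj_pow, hn]
    simp
  obtain ⟨j, hj⟩ := IsPGroup.iff_orderOf.mp hP c
  have hpc : (p : ℤ) ∣ orderOf c := by
    rw [hj]
    exact_mod_cast dvd_pow_self p fun hj0 => hc1 (orderOf_eq_one_iff.mp (by rw [hj, hj0, pow_zero]))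
  obtain ⟨σ, hσ⟩ := dvd_sub_one_of_dvd_pow_prime_pow_sub_one (hpc.trans hdvd)
  exact ⟨σ, fun x hx => by rw [hconj x hx, ← hσ, add_sub_cancel]⟩

theorem exists_mul_pow_prime_pow (h : IsMetacyclicSplitting C K) (hP : IsPGroup p P) (hodd : Odd p)
    (y : P) {c : P} (hc : c ∈ C) (n : ℕ) :
    ∃ t : ℤ, (y * c) ^ p ^ n = y ^ p ^ n * c ^ (p ^ n * (1 + p * t)) := by
  induction n with
  | zero => exact ⟨0, by simp⟩
  | succ n ih =>
    obtain ⟨t, ht⟩ := ih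
    obtain ⟨σ, hσ⟩ := h.exists_conj_eq_zpow hP (y ^ p ^ n)
    obtain ⟨u, hu⟩ := exists_mul_pow_prime hodd (hσ _ (zpow_mem hc (p ^ n * (1 + p * t))))
    refine ⟨t + u + p * t * u, ?_⟩
    rw [pow_succ, pow_mul, ht, hu, ← pow_mul, ← zpow_mul]
    congr 2
    ring

theorem pow_eq_one_of_mul_pow_eq_one (h : IsMetacyclicSplitting C K) (hP : IsPGroup p P)
    (hodd : Odd p) {k c : P} (hk : k ∈ K) (hc : c ∈ C) {n : ℕ} (hkc : (k * c) ^ p ^ n = 1) :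
    k ^ p ^ n = 1 ∧ c ^ p ^ n = 1 := by
  obtain ⟨t, ht⟩ := h.exists_mul_pow_prime_pow hP hodd k hc n
  obtain ⟨hk1, hc1⟩ := h.eq_one_of_mul_eq_one (pow_mem hk _) (zpow_mem hc _) (ht ▸ hkc)
  refine ⟨hk1, mem_bot.mp (mem_of_zpow_mem_of_not_dvd hP (l := 1 + p * t) ?_ ?_)⟩
  · exact fun hdvd => (Nat.prime_iff_prime_int.mp hp.out).not_dvd_one
      ((Int.dvd_add_left (dvd_mul_right _ _)).mp hdvd)
  · rw [mem_bot, ← hc1, zpow_mul, ← Nat.cast_pow, zpow_natCast]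

theorem mul_pow_eq_of_pow_eq_one (h : IsMetacyclicSplitting C K) (hP : IsPGroup p P)
    (hodd : Odd p) (y : P) {c : P} (hc : c ∈ C) {n : ℕ} (hcn : c ^ p ^ (n + 1) = 1) :
    (y * c) ^ p ^ n = y ^ p ^ n * c ^ p ^ n := by
  obtain ⟨t, ht⟩ := h.exists_mul_pow_prime_pow hP hodd y hc n
  have hsplit : (p ^ n * (1 + p * t) : ℤ) = (p ^ n : ℕ) + (p ^ (n + 1) : ℕ) * t := by
    push_cast; ring
  rw [ht, hsplit, zpow_add, zpow_mul, zpow_natCast, zpow_natCast, hcn, one_zpow, mul_one]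

theorem mem_center_of_pow_eq_one (h : IsMetacyclicSplitting C K) (hP : IsPGroup p P) {c : P}
    (hc : c ∈ C) (hcp : c ^ p = 1) : c ∈ center P := by
  refine mem_center_iff.mpr fun y => ?_
  obtain ⟨σ, hσ⟩ := h.exists_conj_eq_zpow hP y
  have hconj := hσ c hc
  rw [zpow_add, zpow_mul, zpow_natCast, hcp, one_zpow, mul_one, zpow_one, mul_assoc] at hconj
  exact (inv_mul_eq_iff_eq_mul.mp hconj).symm

theorem isOmegaRegular (h : IsMetacyclicSplitting C K) (hP : IsPGroup p P) (hodd : Odd p) :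
    IsOmegaRegular p P := by
  intro n x y hx hy
  have := h.isCyclic_left
  have := h.isCyclic_right
  obtain ⟨k, hk, c, hc, rfl⟩ := h.exists_mul_eq x
  obtain ⟨k', hk', c', hc', rfl⟩ := h.exists_mul_eq y
  obtain ⟨-, hcn⟩ := h.pow_eq_one_of_mul_pow_eq_one hP hodd hk hc hx
  obtain ⟨-, hcn'⟩ := h.pow_eq_one_of_mul_pow_eq_one hP hodd hk' hc' hy
  have hcent : c ^ p ^ n ∈ center P :=
    h.mem_center_of_pow_eq_one hP (pow_mem hc _) (by rw [← pow_mul, ← pow_succ, hcn])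
  obtain ⟨d, hdef⟩ : ∃ d, d = k'⁻¹ * c * k' := ⟨_, rfl⟩
  have hd : d ∈ C := by simpa [hdef] using h.normal.conj_mem c hc k'⁻¹
  have hdn : d ^ p ^ n = c ^ p ^ n := by
    have := conj_pow (a := k'⁻¹) (b := c) (i := p ^ n)
    rw [inv_inv] at this
    rw [hdef, this, mul_assoc, ← mem_center_iff.mp hcent, inv_mul_cancel_left]
  have hKcomm : Commute k k' := setLike_mul_comm hk hk'
  have hCcomm : Commute d c' := setLike_mul_comm hd hc'
  calc (k * c * (k' * c')) ^ p ^ n = (k * k' * (d * c')) ^ p ^ n := by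
        rw [hdef]; group
    _ = (k * k') ^ p ^ n * (d * c') ^ p ^ n := by
        refine h.mul_pow_eq_of_pow_eq_one hP hodd _ (mul_mem hd hc') ?_
        rw [hCcomm.mul_pow, hcn', mul_one, pow_succ, pow_mul, hdn, ← pow_mul, ← pow_succ, hcn]
    _ = (k ^ p ^ n * c ^ p ^ n) * (k' ^ p ^ n * c' ^ p ^ n) := by
        rw [hKcomm.mul_pow, hCcomm.mul_pow, hdn, mul_assoc, mul_assoc, ← mul_assoc (k' ^ _),
          mem_center_iff.mp hcent, mul_assoc]
    _ = (k * c) ^ p ^ n * (k' * c') ^ p ^ n := by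
        rw [h.mul_pow_eq_of_pow_eq_one hP hodd k hc hcn,
          h.mul_pow_eq_of_pow_eq_one hP hodd k' hc' hcn']

end IsMetacyclicSplitting

/-- The intersection `P' ∩ Ω₁(P)`, which is `Ω₁(P')` as soon as `Ω₁(P)` has exponent `p`. For a
nonabelian split metacyclic `p`-group with `p` odd it is central of order `p`. -/
def commutatorSocle (p : ℕ) (P : Type*) [Group P] : Subgroup P := commutator P ⊓ omega p 1 P

instance commutatorSocle_characteristic (p : ℕ) (P : Type*) [Group P] :
    (commutatorSocle p P).Characteristic :=
  characteristic_inf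

theorem inv_mul_conj_mem_commutatorSocle {P : Type*} [Group P] {p : ℕ} (s : P) {x : P}
    (hx : x ^ p = 1) : x⁻¹ * (s * x * s⁻¹) ∈ commutatorSocle p P := by
  have hxΩ : x ∈ omega p 1 P := mem_omega_of_pow_eq_one (by rwa [pow_one])
  have hcomm : x⁻¹ * (s * x * s⁻¹) = x⁻¹ * s * x⁻¹⁻¹ * s⁻¹ := by
    rw [inv_inv, mul_assoc, mul_assoc, mul_assoc]
  refine mem_inf.mpr ⟨?_, mul_mem (inv_mem hxΩ) (Normal.conj_mem inferInstance x hxΩ s)⟩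
  exact hcomm ▸ commutator_mem_commutator (mem_top x⁻¹) (mem_top s)

theorem exists_mem_commutator_orderOf_eq {P : Type*} [Group P] [Finite P] {p : ℕ}
    [hp : Fact p.Prime] (hP : IsPGroup p P) (hnab : ¬ IsMulCommutative P) :
    ∃ z ∈ commutator P, orderOf z = p := by
  have hne : commutator P ≠ ⊥ := mt (_root_.commutator_eq_bot_iff P).mp hnab
  have hcard : p ∣ Nat.card (commutator P) :=
    ((hP.to_subgroup _).card_eq_or_dvd).resolve_left (mt (eq_bot_of_card_eq _) hne)
  obtain ⟨z, hz⟩ := exists_prime_orderOf_dvd_card' p hcard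
  exact ⟨z, z.2, by rw [orderOf_coe, hz]⟩

namespace IsMetacyclicSplitting

variable {P : Type*} [Group P] {C K : Subgroup P} {p : ℕ} [hp : Fact p.Prime]

theorem commutatorSocle_le_center (h : IsMetacyclicSplitting C K) (hP : IsPGroup p P)
    (hodd : Odd p) : commutatorSocle p P ≤ center P := fun _ hx =>
  h.mem_center_of_pow_eq_one hP (h.commutator_le hx.1)
    ((h.isOmegaRegular hP hodd).mem_omega_one.mp hx.2)

theorem closure_mul_pair_eq_top (h : IsMetacyclicSplitting C K) (hP : IsPGroup p P) (hodd : Odd p)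
    {a b w : P} (ha : zpowers a = C) (hb : zpowers b = K) {n : ℕ} (han : a ^ p ^ n ≠ 1)
    (hw : w ^ p ^ n = 1) : closure {a * w, b} = ⊤ := by
  have hp1 : ¬ (p : ℤ) ∣ 1 := (Nat.prime_iff_prime_int.mp hp.out).not_dvd_one
  obtain ⟨k, hk, c, hc, rfl⟩ := h.exists_mul_eq w
  obtain ⟨l, rfl⟩ := ha ▸ hc
  have hcn : (a ^ l) ^ p ^ n = 1 := (h.pow_eq_one_of_mul_pow_eq_one hP hodd hk hc hw).2
  have hl : (p : ℤ) ∣ l := by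
    by_contra hl
    refine han (mem_bot.mp (mem_of_zpow_mem_of_not_dvd hP hl ?_))
    rw [mem_bot, ← hcn, ← zpow_natCast, ← zpow_natCast, zpow_comm]
  obtain ⟨σ, hσ⟩ := h.exists_conj_eq_zpow hP k
  have hprod : k⁻¹ * (a * (k * a ^ l)) = a ^ (1 + p * σ + l) := by
    rw [zpow_add, ← hσ a (ha ▸ mem_zpowers a)]
    group
  have hbH : zpowers b ≤ closure {a * (k * a ^ l), b} :=
    zpowers_le.mpr (mem_closure_of_mem (by simp))
  have haH : a ∈ closure {a * (k * a ^ l), b} := by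
    refine mem_of_zpow_mem_of_not_dvd hP (l := 1 + p * σ + l) ?_ ?_
    · rwa [add_assoc, Int.dvd_add_left (dvd_add (dvd_mul_right _ _) hl)]
    · exact hprod ▸ mul_mem (inv_mem (hbH (hb ▸ hk))) (mem_closure_of_mem (by simp))
  rw [eq_top_iff, ← h.sup_eq_top, ← ha, ← hb]
  exact sup_le (zpowers_le.mpr haH) hbH

variable [Finite P]

theorem mem_commutatorSocle_iff (h : IsMetacyclicSplitting C K) (hP : IsPGroup p P) (hodd : Odd p)
    (hnab : ¬ IsMulCommutative P) {x : P} : x ∈ commutatorSocle p P ↔ x ∈ C ∧ x ^ p = 1 := by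
  have hreg := h.isOmegaRegular hP hodd
  have := h.isCyclic_left
  refine ⟨fun hx => ⟨h.commutator_le hx.1, hreg.mem_omega_one.mp hx.2⟩, fun ⟨hxC, hxp⟩ => ?_⟩
  obtain ⟨z, hz, hzp⟩ := exists_mem_commutator_orderOf_eq hP hnab
  have hxz : x ∈ zpowers z :=
    mem_zpowers_of_mem_of_pow_orderOf_eq_one (h.commutator_le hz) hxC (by rw [hzp, hxp])
  exact ⟨zpowers_le.mpr hz hxz, hreg.mem_omega_one.mpr hxp⟩

theorem exists_zpowers_eq_commutatorSocle (h : IsMetacyclicSplitting C K) (hP : IsPGroup p P)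
    (hodd : Odd p) (hnab : ¬ IsMulCommutative P) :
    ∃ z : P, orderOf z = p ∧ zpowers z = commutatorSocle p P := by
  have := h.isCyclic_left
  obtain ⟨z, hz, hzp⟩ := exists_mem_commutator_orderOf_eq hP hnab
  refine ⟨z, hzp, le_antisymm ?_ fun x hx => ?_⟩
  · exact zpowers_le.mpr ((h.mem_commutatorSocle_iff hP hodd hnab).mpr
      ⟨h.commutator_le hz, hzp ▸ pow_orderOf_eq_one z⟩)
  · obtain ⟨hxC, hxp⟩ := (h.mem_commutatorSocle_iff hP hodd hnab).mp hx
    exact mem_zpowers_of_mem_of_pow_orderOf_eq_one (h.commutator_le hz) hxC (by rw [hzp, hxp])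

theorem omega_le_zpowers_sup (h : IsMetacyclicSplitting C K) (hP : IsPGroup p P) (hodd : Odd p)
    (hnab : ¬ IsMulCommutative P) {f : P} (hf : f ∈ omega p 1 P) (hfZ : f ∉ commutatorSocle p P) :
    omega p 1 P ≤ zpowers f ⊔ commutatorSocle p P := by
  have := h.isCyclic_right
  have hmem : ∀ {x}, x ∈ omega p 1 P → ∃ k ∈ K, k ^ p = 1 ∧ ∃ c ∈ commutatorSocle p P,
      k * c = x := fun {x} hx => by
    obtain ⟨k, hk, c, hc, rfl⟩ := h.exists_mul_eq x
    have hpow := h.pow_eq_one_of_mul_pow_eq_one hP hodd hk hc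
      ((h.isOmegaRegular hP hodd).mem_omega.mp hx)
    rw [pow_one] at hpow
    exact ⟨k, hk, hpow.1, c, (h.mem_commutatorSocle_iff hP hodd hnab).mpr ⟨hc, hpow.2⟩, rfl⟩
  intro v hv
  obtain ⟨k₀, hk₀, hk₀p, c₀, hc₀, rfl⟩ := hmem hf
  obtain ⟨k, hk, hkp, c, hc, rfl⟩ := hmem hv
  have hk₀1 : k₀ ≠ 1 := by
    rintro rfl
    exact hfZ (by rwa [one_mul])
  have hkk₀ : k ∈ zpowers k₀ :=
    mem_zpowers_of_mem_of_pow_orderOf_eq_one hk₀ hk (by rw [orderOf_eq_prime hk₀p hk₀1, hkp])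
  have hk₀mem : k₀ ∈ zpowers (k₀ * c₀) ⊔ commutatorSocle p P := by
    have := mul_mem (mem_sup_left (mem_zpowers (k₀ * c₀))) (mem_sup_right (inv_mem hc₀))
    rwa [mul_inv_cancel_right] at this
  exact mul_mem (zpowers_le.mpr hk₀mem hkk₀) (mem_sup_right hc)

variable {q : ℕ} {φ : MulAut P}

theorem exists_fixed_generator (h : IsMetacyclicSplitting C K) (hP : IsPGroup p P) (hodd : Odd p)
    (hnab : ¬ IsMulCommutative P) (hq : q.Prime) (hqp : q ≠ p) (hφ : φ ^ q = 1)
    (hZ : ∀ z ∈ commutatorSocle p P, φ z = z) {b : P} (hb : zpowers b = K) :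
    ∃ x, φ x = x ∧ closure {x, b} = ⊤ := by
  have hreg := h.isOmegaRegular hP hodd
  obtain ⟨a, ha⟩ := C.isCyclic_iff_exists_zpowers_eq_top.mp h.isCyclic_left
  obtain ⟨m, hm⟩ := IsPGroup.iff_orderOf.mp hP a
  obtain ⟨z, hz, hzp⟩ := exists_mem_commutator_orderOf_eq hP hnab
  have haC : a ∈ C := ha ▸ mem_zpowers a
  have hm0 : m ≠ 0 := fun hm0 => by
    have hdvd := orderOf_dvd_of_mem_zpowers (ha ▸ h.commutator_le hz)
    rw [hzp, hm, hm0, pow_zero] at hdvd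
    exact hp.out.not_dvd_one hdvd
  obtain ⟨n, rfl⟩ := Nat.exists_eq_succ_of_ne_zero hm0
  have han : a ^ p ^ n ≠ 1 := fun han => by
    have hdvd := hm ▸ orderOf_dvd_of_pow_eq_one han
    exact Nat.not_succ_le_self n ((Nat.pow_dvd_pow_iff_le_right hp.out.one_lt).mp hdvd)
  have hfix : φ (a ^ p ^ n) = a ^ p ^ n := by
    refine hZ _ ((h.mem_commutatorSocle_iff hP hodd hnab).mpr ⟨pow_mem haC _, ?_⟩)
    rw [← pow_mul, ← pow_succ, ← hm, pow_orderOf_eq_one]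
  have hmem : a⁻¹ * φ a ∈ omega p n P := by
    have hφa : φ a ^ p ^ (n + 1) = 1 := by rw [← map_pow, ← hm, pow_orderOf_eq_one, map_one]
    rw [hreg.mem_omega, hreg n _ _ (by rw [inv_pow, ← hm, pow_orderOf_eq_one, inv_one]) hφa,
      inv_pow, ← map_pow, hfix, inv_mul_cancel]
  have hW : ∀ w, φ w ∈ omega p n P ↔ w ∈ omega p n P := fun w => by
    rw [← SetLike.ext_iff.mp (characteristic_iff_comap_eq.mp inferInstance φ) w]
    rfl
  obtain ⟨w, hw, hφw⟩ := exists_fixed_mul hq hqp hφ (hP.to_subgroup _) hW hmem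
  exact ⟨a * w, hφw, h.closure_mul_pair_eq_top hP hodd ha hb han (hreg.mem_omega.mp hw)⟩

theorem eq_one_of_fixes_commutatorSocle (h : IsMetacyclicSplitting C K) (hP : IsPGroup p P)
    (hodd : Odd p) (hnab : ¬ IsMulCommutative P) (hq : q.Prime) (hqp : q ≠ p) (hφ : φ ^ q = 1)
    (hZ : ∀ z ∈ commutatorSocle p P, φ z = z) : φ = 1 := by
  have hreg := h.isOmegaRegular hP hodd
  obtain ⟨b, hb⟩ := K.isCyclic_iff_exists_zpowers_eq_top.mp h.isCyclic_right
  obtain ⟨x, hx, hgen⟩ := h.exists_fixed_generator hP hodd hnab hq hqp hφ hZ hb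
  have hcomm : ∀ c ∈ commutator P, φ c = c :=
    hreg.fixed_of_fixed_omega hP hq hqp hφ
      (fun _ hc => characteristic_iff_le_comap.mp inferInstance φ hc)
      fun c hc hcp => hZ c ⟨hc, hreg.mem_omega_one.mpr hcp⟩
  exact eq_one_of_fixes_commutator hq hqp hφ hP hgen
    (mt (isMulCommutative_of_closure_pair_eq_top hgen) hnab) hx hcomm

end IsMetacyclicSplitting

/-! ### Opposite transvections -/

section Transvection

variable {P : Type*} [Group P] {p : ℕ} {e f : P}

theorem exists_pow_apply_eq_mul [Finite P] [hp : Fact p.Prime] (he : e ^ p = 1) {φ : MulAut P}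
    (hφe : φ e = e) (hφf : f⁻¹ * φ f ∈ zpowers e) (hne : φ f ≠ f) {y : P} (hy : y ∈ zpowers e) :
    ∃ n : ℕ, (φ ^ n) e = e ∧ (φ ^ n) f = f * y := by
  have hep : ∀ x ∈ zpowers e, φ x = x ∧ x ^ p = 1 := by
    rintro _ ⟨l, rfl⟩
    refine ⟨by rw [map_zpow, hφe], ?_⟩
    rw [← zpow_natCast, zpow_comm, zpow_natCast, he, one_zpow]
  have hord : orderOf (f⁻¹ * φ f) = p :=
    orderOf_eq_prime (hep _ hφf).2 fun h => hne (inv_mul_eq_one.mp h).symm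
  have hyw : y ∈ zpowers (f⁻¹ * φ f) :=
    mem_zpowers_of_mem_of_pow_orderOf_eq_one hφf hy (hord.symm ▸ (hep y hy).2)
  obtain ⟨n, rfl⟩ := mem_powers_iff_mem_zpowers.mpr hyw
  refine ⟨n, ?_, mulAut_pow_apply_of_fixed (mul_inv_cancel_left f _).symm (hep _ hφf).1 n⟩
  simpa using mulAut_pow_apply_of_fixed (w := 1) (by rw [hφe, mul_one]) (map_one φ) n

theorem apply_eq_inv_of_mem_closure_pair (hef : Commute e f) {φ : MulAut P} (he : φ e = e⁻¹)
    (hf : φ f = f⁻¹) {x : P} (hx : x ∈ closure {e, f}) : φ x = x⁻¹ := by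
  have hcomm : IsMulCommutative (closure {e, f}) := isMulCommutative_closure <| by
    rintro u (rfl | rfl) v (rfl | rfl)
    exacts [rfl, hef, hef.symm, rfl]
  induction hx using closure_induction with
  | mem x hx => exact hx.elim (fun h => h ▸ he) (fun h => Set.mem_singleton_iff.mp h ▸ hf)
  | one => rw [map_one, inv_one]
  | mul x y hx hy ihx ihy => rw [map_mul, ihx, ihy, ← mul_inv_rev, setLike_mul_comm hx hy]
  | inv x _ ihx => rw [map_inv, ihx]

theorem exists_mem_closure_apply_eq_inv [Finite P] [Fact p.Prime] (he : e ^ p = 1) (hf : f ^ p = 1)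
    (hef : Commute e f) {φ ψ : MulAut P} (hφe : φ e = e) (hφf : f⁻¹ * φ f ∈ zpowers e)
    (hφ : φ f ≠ f) (hψf : ψ f = f) (hψe : e⁻¹ * ψ e ∈ zpowers f) (hψ : ψ e ≠ e) :
    ∃ θ ∈ closure {φ, ψ}, ∀ x ∈ closure {e, f}, θ x = x⁻¹ := by
  obtain ⟨m, hme, hmf⟩ := exists_pow_apply_eq_mul he hφe hφf hφ (mem_zpowers e)
  obtain ⟨n, hnf, hne⟩ := exists_pow_apply_eq_mul hf hψf hψe hψ (inv_mem (mem_zpowers f))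
  -- The quarter turn `[[1, 1], [0, 1]] * [[1, 0], [-1, 1]] * [[1, 1], [0, 1]]`;
  -- its square is `-1`.
  let τ : MulAut P := φ ^ m * ψ ^ n * φ ^ m
  have hτe : τ e = f⁻¹ := by
    simp only [τ, MulAut.mul_apply, hme, hmf, hne, map_mul, map_inv, mul_inv_rev]
    rw [mul_inv_cancel_left]
  have hτf : τ f = e := by
    simp only [τ, MulAut.mul_apply, hme, hmf, hne, hnf, map_mul, map_inv, mul_inv_rev]
    rw [mul_inv_cancel_left, hef.symm.mul_inv_cancel]
  have hτ : τ ∈ closure {φ, ψ} :=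
    mul_mem (mul_mem (pow_mem (mem_closure_of_mem (by simp)) m)
      (pow_mem (mem_closure_of_mem (by simp)) n)) (pow_mem (mem_closure_of_mem (by simp)) m)
  refine ⟨τ * τ, mul_mem hτ hτ, fun x => apply_eq_inv_of_mem_closure_pair hef ?_ ?_⟩
  · rw [MulAut.mul_apply, hτe, map_inv, hτf]
  · rw [MulAut.mul_apply, hτf, hτe]

end Transvection

/-! ### The Frattini argument -/

section SylowImage

variable {p : ℕ} [Fact p.Prime] {H A : Type*} [Group H] [Finite H] [Group A] (S : Sylow p H)
  (ρ : H →* A)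

theorem exists_mem_normalizer_map_eq {g : H}
    (hg : ρ g ∈ normalizer ((S : Subgroup H).map ρ : Set A)) :
    ∃ n ∈ normalizer ((S : Subgroup H) : Set H), ρ n = ρ g := by
  have hS : (S : Subgroup H) ≤ ((S : Subgroup H).map ρ).comap ρ := le_comap_map _ _
  have hgS : ((g • S : Sylow p H) : Subgroup H) ≤ ((S : Subgroup H).map ρ).comap ρ := by
    rintro _ ⟨s, hs, rfl⟩
    simpa using (mem_normalizer_iff.mp hg (ρ s)).mp (mem_map_of_mem ρ hs)
  obtain ⟨t, ht⟩ := MulAction.exists_smul_eq (((S : Subgroup H).map ρ).comap ρ)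
    ((g • S).subtype hgS) (S.subtype hS)
  rw [Sylow.smul_subtype] at ht
  have htg : (t * g : H) ∈ normalizer ((S : Subgroup H) : Set H) :=
    Sylow.smul_eq_iff_mem_normalizer.mp ((mul_smul _ _ _).trans (Sylow.subtype_injective ht))
  obtain ⟨s, hs, hst⟩ := t.2
  refine ⟨s⁻¹ * (t * g), mul_mem (inv_mem (le_normalizer hs)) htg, ?_⟩
  rw [map_mul, map_inv, hst, map_mul, inv_mul_cancel_left]

theorem sylow_map_eq_inf_range {B : Subgroup A} (hB : IsPGroup p B)
    (hSB : (S : Subgroup H).map ρ ≤ B) : (S : Subgroup H).map ρ = B ⊓ ρ.range := by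
  have hmax := (S.mapSurjective ρ.rangeRestrict_surjective).is_maximal'
    (hB.comap_of_injective ρ.range.subtype ρ.range.subtype_injective) <| by
      rintro _ ⟨s, hs, rfl⟩
      exact hSB (mem_map_of_mem ρ hs)
  rw [← subgroupOf_map_subtype, subgroupOf, hmax, Sylow.coe_mapSurjective, map_map,
    MonoidHom.subtype_comp_rangeRestrict]

theorem exists_mem_normalizer_map_eq_of_le {B : Subgroup A} (hB : IsPGroup p B)
    (hSB : (S : Subgroup H).map ρ ≤ B) {g : H} (hg : ρ g ∈ normalizer (B : Set A)) :
    ∃ n ∈ normalizer ((S : Subgroup H) : Set H), ρ n = ρ g := by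
  refine exists_mem_normalizer_map_eq S ρ ?_
  rw [sylow_map_eq_inf_range S ρ hB hSB]
  exact inf_normalizer_le_normalizer_inf ⟨hg, le_normalizer (ρ.mem_range.mpr ⟨g, rfl⟩)⟩

end SylowImage

section Normalizer

variable {G : Type*} [Group G]

theorem normalizer_le_normalizer_map_subtype (H : Subgroup G)
    (K : Subgroup H) [K.Characteristic] :
    normalizer (H : Set G) ≤ normalizer (K.map H.subtype : Set G) := by
  have hconj : ∀ g ∈ normalizer (H : Set G), ∀ x ∈ K.map H.subtype,
      g * x * g⁻¹ ∈ K.map H.subtype := by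
    rintro g hg _ ⟨x, hx, rfl⟩
    exact ⟨_, characteristic_iff_le_comap.mp ‹_› (H.normalizerMonoidHom ⟨g, hg⟩) hx, rfl⟩
  exact le_normalizer_iff.mpr hconj

theorem normalizer_le_normalizer_of_characteristic {H Q : Subgroup G} (hQH : Q ≤ H)
    (hQ : (Q.subgroupOf H).Characteristic) :
    normalizer (H : Set G) ≤ normalizer (Q : Set G) := by
  have hle := normalizer_le_normalizer_map_subtype H (Q.subgroupOf H)
  rwa [map_subgroupOf_eq_of_le hQH] at hle

theorem normalizer_mul_centralizer_eq {H Q : Subgroup G}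
    (hHQ : normalizer (H : Set G) ≤ normalizer (Q : Set G))
    (hex : ∀ g ∈ normalizer (Q : Set G), ∃ n ∈ normalizer (H : Set G),
      n⁻¹ * g ∈ centralizer (Q : Set G)) :
    (normalizer (H : Set G) : Set G) * (centralizer (Q : Set G) : Set G) =
      (normalizer (Q : Set G) : Set G) := by
  refine Set.Subset.antisymm ?_ fun g hg => ?_
  · rintro _ ⟨n, hn, c, hc, rfl⟩
    exact mul_mem (hHQ hn) (centralizer_le_normalizer _ hc)
  · obtain ⟨n, hn, hc⟩ := hex g hg
    exact ⟨n, hn, n⁻¹ * g, hc, mul_inv_cancel_left n g⟩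

theorem inv_mul_mem_centralizer_of_normalizerMonoidHom_eq {Q : Subgroup G}
    {n g : normalizer (Q : Set G)} (h : Q.normalizerMonoidHom n = Q.normalizerMonoidHom g) :
    (n : G)⁻¹ * g ∈ centralizer (Q : Set G) := by
  have hker : n⁻¹ * g ∈ Q.normalizerMonoidHom.ker := by
    rw [MonoidHom.mem_ker, map_mul, map_inv, h, inv_mul_cancel]
  rwa [normalizerMonoidHom_ker, mem_subgroupOf] at hker

variable {p : ℕ} (S : Sylow p G)

theorem mem_normalizer_of_mem_normalizer_subtype {H : Subgroup G} (hSH : S ≤ H) {n : H}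
    (hn : n ∈ normalizer ((S.subtype hSH : Subgroup H) : Set H)) :
    (n : G) ∈ normalizer ((S : Subgroup G) : Set G) := by
  rw [Sylow.coe_subtype, ← subgroupOf_normalizer_eq hSH] at hn
  exact hn

theorem exists_mem_normalizer_inv_mul_mem_centralizer_of_isPGroup [Finite G] [Fact p.Prime]
    {Q : Subgroup G}
    (hSQ : S ≤ normalizer (Q : Set G)) {B : Subgroup (MulAut Q)} (hB : IsPGroup p B)
    (hSB : (S.subtype hSQ : Subgroup _).map Q.normalizerMonoidHom ≤ B)
    {g : normalizer (Q : Set G)} (hg : Q.normalizerMonoidHom g ∈ normalizer (B : Set (MulAut Q))) :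
    ∃ n ∈ normalizer ((S : Subgroup G) : Set G), n⁻¹ * g ∈ centralizer (Q : Set G) := by
  obtain ⟨n, hn, hng⟩ := exists_mem_normalizer_map_eq_of_le _ _ hB hSB hg
  exact ⟨n, mem_normalizer_of_mem_normalizer_subtype S hSQ hn,
    inv_mul_mem_centralizer_of_normalizerMonoidHom_eq hng⟩

end Normalizer

/-! ### Control of fusion -/

section Fusion

variable {G : Type*} [Group G] [Finite G] {p : ℕ} [Fact p.Prime]

theorem exists_mem_normalizer_conj_eq_inv {V : Subgroup G} {g s z : G} (hzp : z ^ p = 1)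
    (hg : g ∈ normalizer (V : Set G)) (hs : s ∈ normalizer (V : Set G)) (hz : z ∈ V)
    (hsz : Commute s z) (hsV : ∀ v ∈ V, v⁻¹ * (s * v * s⁻¹) ∈ zpowers z)
    (hne : ∃ v ∈ V, ¬ Commute s v) (hgz : Commute z (g * z * g⁻¹))
    (hV : V ≤ closure {z, g * z * g⁻¹}) :
    ∃ r ∈ normalizer (V : Set G), ∀ v ∈ V, r * v * r⁻¹ = v⁻¹ := by
  obtain ⟨v, hv, hsv⟩ := hne
  have hf : g * z * g⁻¹ ∈ V := (mem_normalizer_iff.mp hg z).mp hz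
  have hfp : (g * z * g⁻¹) ^ p = 1 := by rw [conj_pow, hzp, mul_one, mul_inv_cancel]
  have hcent : ∀ {t}, t * z * t⁻¹ = z → t * (g * z * g⁻¹) * t⁻¹ = g * z * g⁻¹ →
      V ≤ centralizer {t} := by
    refine fun {t} htz htf => hV.trans ((closure_le _).mpr (Set.pair_subset ?_ ?_))
    · exact mem_centralizer_singleton_iff.mpr (mul_inv_eq_iff_eq_mul.mp htz).symm
    · exact mem_centralizer_singleton_iff.mpr (mul_inv_eq_iff_eq_mul.mp htf).symm
  have hφe : MulAut.conj s z = z := by simpa using hsz.mul_inv_cancel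
  have hψf : MulAut.conj (g * s * g⁻¹) (g * z * g⁻¹) = g * z * g⁻¹ := by
    have := congrArg (fun x => g * x * g⁻¹) hsz.mul_inv_cancel
    simpa [mul_assoc] using this
  have hφ : MulAut.conj s (g * z * g⁻¹) ≠ g * z * g⁻¹ := fun hφ =>
    hsv (mem_centralizer_singleton_iff.mp (hcent hφe hφ hv)).symm
  have hψ : MulAut.conj (g * s * g⁻¹) z ≠ z := fun hψ => by
    have hconj := hcent hψ hψf ((mem_normalizer_iff.mp hg v).mp hv)
    exact hsv ((Commute.conj_iff g).mp (mem_centralizer_singleton_iff.mp hconj).symm)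
  have hψe : z⁻¹ * MulAut.conj (g * s * g⁻¹) z ∈ zpowers (g * z * g⁻¹) := by
    obtain ⟨l, hl⟩ := hsV (g⁻¹ * z * g) ((mem_normalizer_iff''.mp hg z).mp hz)
    refine ⟨l, ?_⟩
    have hconj := congrArg (fun x => g * x * g⁻¹) hl
    rw [← conj_zpow] at hconj
    simpa only [MulAut.conj_apply, mul_assoc, mul_inv_rev, inv_inv, mul_inv_cancel_left] using hconj
  obtain ⟨θ, hθ, hinv⟩ := exists_mem_closure_apply_eq_inv hzp hfp hgz hφe (hsV _ hf) hφ hψf hψe hψ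
  rw [← Set.image_pair, ← MonoidHom.map_closure] at hθ
  obtain ⟨r, hr, rfl⟩ := hθ
  refine ⟨r, ?_, fun v hv => hinv v (hV hv)⟩
  exact (closure_le _).mpr
    (Set.pair_subset hs (mul_mem (mul_mem hg hs) (inv_mem hg))) hr

variable (S : Sylow p G) {Q L : Subgroup G}

theorem exists_mem_normalizer_of_centralizes_chain (hreg : IsOmegaRegular p Q)
    (hQ : IsPGroup p Q) (hSQ : S ≤ normalizer (Q : Set G)) (hLS : L ≤ centralizer (S : Set G))
    (hcomm : ∀ s ∈ S, ∀ v ∈ Q, v ^ p = 1 → v⁻¹ * (s * v * s⁻¹) ∈ L) {g : G}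
    (hgQ : g ∈ normalizer (Q : Set G)) (hgL : g ∈ normalizer (L : Set G)) :
    ∃ n ∈ normalizer ((S : Subgroup G) : Set G), n⁻¹ * g ∈ centralizer (Q : Set G) := by
  refine exists_mem_normalizer_inv_mul_mem_centralizer_of_isPGroup S hSQ (g := ⟨g, hgQ⟩)
    (hreg.isPGroup_chainStabilizer hQ (L.subgroupOf Q)) ?_ ?_
  · rintro _ ⟨s, hs, rfl⟩
    refine ⟨fun l hl => Subtype.ext ?_, fun v hv => ?_⟩
    · exact mul_inv_eq_of_eq_mul (hLS hl s hs)
    · exact hcomm s hs v v.2 (congrArg Subtype.val (hreg.mem_omega_one.mp hv))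
  · refine stabilizer_inf_stabilizer_le_normalizer_chainStabilizer _ _ ⟨?_, ?_⟩
    · refine MulAction.mem_stabilizer_iff.mpr (Subgroup.ext fun x => ?_)
      have hx : ((Q.normalizerMonoidHom ⟨g, hgQ⟩⁻¹ • x : Q) : G) = g⁻¹ * x * g := by
        change g⁻¹ * x * g⁻¹⁻¹ = _
        rw [inv_inv]
      rw [mem_pointwise_smul_iff_inv_smul_mem, mem_subgroupOf, mem_subgroupOf, ← map_inv, hx]
      exact (mem_normalizer_iff''.mp hgL x).symm
    · exact characteristic_iff_map_eq.mp inferInstance _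

theorem commute_of_normalizer_inverts_omega (hodd : Odd p) (hreg : IsOmegaRegular p S) {r : G}
    (hr : r ∈ normalizer ((omega p 1 S).map (S : Subgroup G).subtype : Set G))
    (hinv : ∀ v ∈ (omega p 1 S).map (S : Subgroup G).subtype, r * v * r⁻¹ = v⁻¹) (x y : S) :
    Commute x y := by
  obtain ⟨V, hVdef⟩ : ∃ V, V = (omega p 1 S).map (S : Subgroup G).subtype := ⟨_, rfl⟩
  rw [← hVdef] at hr hinv
  have hSV : S ≤ normalizer (V : Set G) :=
    hVdef ▸ le_normalizer.trans (normalizer_le_normalizer_map_subtype (S : Subgroup G) _)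
  have hcenter : V.normalizerMonoidHom ⟨r, hr⟩ ∈ center (MulAut V) := by
    have hr' : ∀ v : V, V.normalizerMonoidHom ⟨r, hr⟩ v = v⁻¹ := fun v =>
      Subtype.ext (hinv v v.2)
    refine mem_center_iff.mpr fun ψ => MulEquiv.ext fun v => ?_
    rw [MulAut.mul_apply, MulAut.mul_apply, hr', hr', map_inv]
  obtain ⟨n, hn, hnr⟩ := exists_mem_normalizer_inv_mul_mem_centralizer_of_isPGroup S hSV
    (g := ⟨r, hr⟩) ((S.subtype hSV).2.map _) le_rfl (center_le_normalizer _ hcenter)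
  have hninv : ∀ v ∈ V, n * v * n⁻¹ = v⁻¹ := fun v hv => by
    have hv' : v * (n⁻¹ * r) = n⁻¹ * r * v := hnr v hv
    calc n * v * n⁻¹ = n * (v * (n⁻¹ * r)) * r⁻¹ := by group
      _ = v⁻¹ := by rw [hv', ← hinv v hv]; group
  refine hreg.commute_of_inverts_omega hodd S.2 (φ := normalizerMonoidHom _ ⟨n, hn⟩)
    (fun x hx => Subtype.ext (hninv x ?_)) x y
  exact hVdef ▸ mem_map_of_mem _ (hreg.mem_omega_one.mpr hx)

end Fusion

theorem IsOmegaRegular.map_omega_one_eq_of_le {G : Type*} [Group G] {p : ℕ} {H Q : Subgroup G}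
    (hreg : IsOmegaRegular p H) (hQH : Q ≤ H) (hΩ : omega p 1 H ≤ Q.subgroupOf H) :
    (omega p 1 Q).map Q.subtype = (omega p 1 H).map H.subtype := by
  have hregQ : IsOmegaRegular p Q := hreg.of_injective (inclusion_injective hQH)
  ext x
  constructor
  · rintro ⟨v, hv, rfl⟩
    exact ⟨⟨v, hQH v.2⟩, hreg.mem_omega_one.mpr
      (Subtype.ext (congrArg (fun y : Q => (y : G)) (hregQ.mem_omega_one.mp hv))), rfl⟩
  · rintro ⟨v, hv, rfl⟩
    exact ⟨⟨v, hΩ hv⟩, hregQ.mem_omega_one.mpr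
      (Subtype.ext (congrArg (fun y : H => (y : G)) (hreg.mem_omega_one.mp hv))), rfl⟩

namespace IsMetacyclicSplitting

variable {G : Type*} [Group G] {p : ℕ} [Fact p.Prime] {S : Sylow p G}
  {C K : Subgroup S}

theorem map_commutatorSocle_le_centralizer (h : IsMetacyclicSplitting C K) (hodd : Odd p) :
    (commutatorSocle p S).map (S : Subgroup G).subtype ≤ centralizer (S : Set G) := by
  rintro _ ⟨z, hz, rfl⟩ s hs
  exact congrArg Subtype.val
    (mem_center_iff.mp (h.commutatorSocle_le_center S.2 hodd hz) ⟨s, hs⟩)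

variable [Finite G]

theorem exists_inverts_omega_of_not_mem_normalizer (h : IsMetacyclicSplitting C K)
    (hodd : Odd p) {s f : S} (hf : f ^ p = 1) (hsf : ¬ Commute s f) {g : G}
    (hg : g ∈ normalizer ((omega p 1 S).map (S : Subgroup G).subtype : Set G))
    (hgZ : g ∉ normalizer ((commutatorSocle p S).map (S : Subgroup G).subtype : Set G)) :
    ∃ r ∈ normalizer ((omega p 1 S).map (S : Subgroup G).subtype : Set G),
      ∀ v ∈ (omega p 1 S).map (S : Subgroup G).subtype, r * v * r⁻¹ = v⁻¹ := by
  have hnab : ¬ IsMulCommutative S := fun _ => hsf (mul_comm' s f)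
  have hreg := h.isOmegaRegular S.2 hodd
  obtain ⟨z, hzp, hz⟩ := h.exists_zpowers_eq_commutatorSocle S.2 hodd hnab
  have hzZ : z ∈ commutatorSocle p S := hz ▸ mem_zpowers z
  have hcent := mem_center_iff.mp (h.commutatorSocle_le_center S.2 hodd hzZ)
  have hmap : (commutatorSocle p S).map (S : Subgroup G).subtype = zpowers (z : G) := by
    rw [← hz, MonoidHom.map_zpowers, coe_subtype]
  obtain ⟨z', hz', hgz : (z' : G) = g * z * g⁻¹⟩ :=
    (mem_normalizer_iff.mp hg z).mp (mem_map_of_mem _ hzZ.2)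
  have hz'Z : z' ∉ commutatorSocle p S := fun hz'Z => by
    refine hgZ (mem_normalizer_fintype fun x hx => ?_)
    obtain ⟨l, rfl⟩ := mem_zpowers_iff.mp (hmap ▸ hx)
    rw [← conj_zpow, ← hgz]
    exact zpow_mem (mem_map_of_mem (S : Subgroup G).subtype hz'Z) l
  have hV : omega p 1 S ≤ closure {z, z'} := by
    refine (h.omega_le_zpowers_sup S.2 hodd hnab hz' hz'Z).trans (sup_le ?_ (hz ▸ ?_)) <;>
      exact zpowers_le.mpr (mem_closure_of_mem (by simp))
  have hVmap := Subgroup.map_mono (f := (S : Subgroup G).subtype) hV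
  rw [MonoidHom.map_closure, Set.image_pair, coe_subtype, hgz] at hVmap
  have hzp' : (z : G) ^ p = 1 :=
    congrArg Subtype.val (orderOf_dvd_iff_pow_eq_one.mp hzp.dvd)
  refine exists_mem_normalizer_conj_eq_inv hzp' hg
    (normalizer_le_normalizer_map_subtype _ _ (le_normalizer s.2)) (mem_map_of_mem _ hzZ.2)
    (congrArg Subtype.val (hcent s)) ?_ ?_ ?_ hVmap
  · rintro _ ⟨v, hv, rfl⟩
    exact hmap ▸ mem_map_of_mem (S : Subgroup G).subtype
      (inv_mul_conj_mem_commutatorSocle s (hreg.mem_omega_one.mp hv))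
  · exact ⟨f, mem_map_of_mem (S : Subgroup G).subtype (hreg.mem_omega_one.mpr hf),
      fun hcomm => hsf (Subtype.ext hcomm)⟩
  · rw [← hgz]
    exact congrArg Subtype.val (hcent z').symm

theorem normalizer_omega_le_normalizer_commutatorSocle (h : IsMetacyclicSplitting C K)
    (hodd : Odd p) {s f : S} (hf : f ^ p = 1) (hsf : ¬ Commute s f) :
    normalizer ((omega p 1 S).map (S : Subgroup G).subtype : Set G) ≤
      normalizer ((commutatorSocle p S).map (S : Subgroup G).subtype : Set G) := by
  intro g hg
  by_contra hgZ
  obtain ⟨r, hr, hinv⟩ := h.exists_inverts_omega_of_not_mem_normalizer hodd hf hsf hg hgZ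
  exact hsf (commute_of_normalizer_inverts_omega S hodd (h.isOmegaRegular S.2 hodd) hr hinv s f)

theorem omega_le_of_not_commute (h : IsMetacyclicSplitting C K) (hodd : Odd p) {Q : Subgroup S}
    [hQ : Q.Normal] {s f : S} (hfQ : f ∈ Q) (hf : f ^ p = 1) (hsf : ¬ Commute s f) :
    omega p 1 S ≤ Q := by
  have hnab : ¬ IsMulCommutative S := fun _ => hsf (mul_comm' s f)
  have hreg := h.isOmegaRegular S.2 hodd
  have hZ := fun {x} => h.mem_commutatorSocle_iff S.2 hodd hnab (x := x)
  have hfZ : f ∉ commutatorSocle p S := fun hfZ =>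
    hsf (mem_center_iff.mp (h.commutatorSocle_le_center S.2 hodd hfZ) s)
  have hw := hZ.mp (inv_mul_conj_mem_commutatorSocle s hf)
  have hwQ : f⁻¹ * (s * f * s⁻¹) ∈ Q := mul_mem (inv_mem hfQ) (hQ.conj_mem f hfQ s)
  have hw1 : f⁻¹ * (s * f * s⁻¹) ≠ 1 := fun hw1 =>
    hsf (eq_mul_inv_iff_mul_eq.mp (inv_mul_eq_one.mp hw1)).symm
  have hZQ : commutatorSocle p S ≤ Q := fun x hx => by
    have := h.isCyclic_left
    refine zpowers_le.mpr hwQ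
      (mem_zpowers_of_mem_of_pow_orderOf_eq_one hw.1 (hZ.mp hx).1 ?_)
    rw [orderOf_eq_prime hw.2 hw1, (hZ.mp hx).2]
  exact (h.omega_le_zpowers_sup S.2 hodd hnab (hreg.mem_omega_one.mpr hf) hfZ).trans
    (sup_le (zpowers_le.mpr hfQ) hZQ)

theorem exists_mem_normalizer_inv_mul_mem_centralizer (h : IsMetacyclicSplitting C K)
    (hodd : Odd p) {Q : Subgroup G} (hQS : Q ≤ S) (hSQ : S ≤ normalizer (Q : Set G)) {g : G}
    (hg : g ∈ normalizer (Q : Set G)) :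
    ∃ n ∈ normalizer ((S : Subgroup G) : Set G), n⁻¹ * g ∈ centralizer (Q : Set G) := by
  have hreg := h.isOmegaRegular S.2 hodd
  have hregQ : IsOmegaRegular p Q := hreg.of_injective (inclusion_injective hQS)
  have hQ : IsPGroup p Q := S.2.to_le hQS
  by_cases hfix : ∀ s ∈ S, ∀ v ∈ Q, v ^ p = 1 → s * v = v * s
  · refine exists_mem_normalizer_of_centralizes_chain S (L := ⊥) hregQ hQ hSQ bot_le
      (fun s hs v hv hvp => ?_) hg (by rw [normalizer_eq_top]; exact mem_top g)
    rw [mem_bot, inv_mul_eq_one, eq_mul_inv_iff_mul_eq, hfix s hs v hv hvp]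
  push Not at hfix
  obtain ⟨s, hs, f, hfQ, hfp, hsf⟩ := hfix
  have hsf' : ¬ Commute (⟨s, hs⟩ : S) ⟨f, hQS hfQ⟩ := fun hcomm => hsf (congrArg Subtype.val hcomm)
  have hfp' : (⟨f, hQS hfQ⟩ : S) ^ p = 1 := Subtype.ext hfp
  have hnormal : (Q.subgroupOf S).Normal := (normal_subgroupOf_iff_le_normalizer hQS).mpr hSQ
  have hΩQ := h.omega_le_of_not_commute hodd (Q := Q.subgroupOf S) hfQ hfp' hsf'
  have hgZ := h.normalizer_omega_le_normalizer_commutatorSocle hodd hfp' hsf'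
    (hreg.map_omega_one_eq_of_le hQS hΩQ ▸ normalizer_le_normalizer_map_subtype Q (omega p 1 Q) hg)
  refine exists_mem_normalizer_of_centralizes_chain S hregQ hQ hSQ
    (h.map_commutatorSocle_le_centralizer hodd) (fun s hs v hv hvp => ?_) hg hgZ
  exact mem_map_of_mem (S : Subgroup G).subtype
    (inv_mul_conj_mem_commutatorSocle ⟨s, hs⟩ (x := ⟨v, hQS hv⟩) (Subtype.ext hvp))

end IsMetacyclicSplitting

/-! ### The automizer of a Sylow subgroup -/

section Quotient

variable {G : Type*} [Group G] [Finite G] {p : ℕ} [Fact p.Prime]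

theorem mem_sup_centralizer_of_normalizerMonoidHom_mem (S : Sylow p G) {B : Subgroup (MulAut S)}
    (hB : IsPGroup p B)
    (hSB : (S.subtype le_normalizer : Subgroup _).map (normalizerMonoidHom (S : Subgroup G)) ≤ B)
    {x : normalizer ((S : Subgroup G) : Set G)} (hx : normalizerMonoidHom (S : Subgroup G) x ∈ B) :
    (x : G) ∈ (S : Subgroup G) ⊔ centralizer ((S : Subgroup G) : Set G) := by
  obtain ⟨s, hs, hsx⟩ := (sylow_map_eq_inf_range _ _ hB hSB).ge (mem_inf.mpr ⟨hx, x, rfl⟩)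
  rw [← mul_inv_cancel_left (s : G) x]
  exact mul_mem_sup hs (inv_mul_mem_centralizer_of_normalizerMonoidHom_eq hsx)

theorem isCyclic_quotient_ker_mulAut {N Z : Type*} [Group N] [Group Z] [IsCyclic Z]
    (hZ : Nat.card Z = p) (f : N →* MulAut Z) :
    IsCyclic (N ⧸ f.ker) ∧ Nat.card (N ⧸ f.ker) ∣ p - 1 := by
  have e : MulAut Z ≃* (ZMod p)ˣ := hZ ▸ IsCyclic.mulAutMulEquiv Z
  have hinj : Function.Injective (e.toMonoidHom.comp (QuotientGroup.kerLift f)) :=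
    e.injective.comp (QuotientGroup.kerLift_injective f)
  refine ⟨isCyclic_of_injective _ hinj, ?_⟩
  simpa only [Nat.card_eq_fintype_card, ZMod.card_units] using card_dvd_of_injective _ hinj

end Quotient

namespace IsMetacyclicSplitting

variable {G : Type*} [Group G] [Finite G] {p : ℕ} [Fact p.Prime] {S : Sylow p G} {C K : Subgroup S}

theorem isPGroup_fixingSubgroup_commutatorSocle (h : IsMetacyclicSplitting C K) (hodd : Odd p)
    (hnab : ¬ IsMulCommutative S) :
    IsPGroup p (fixingSubgroup (MulAut S) (commutatorSocle p S : Set S)) := by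
  refine isPGroup_of_forall_pow_prime_eq_one fun q hq hqp φ hφ => Subtype.ext ?_
  exact h.eq_one_of_fixes_commutatorSocle S.2 hodd hnab hq hqp (congrArg Subtype.val hφ)
    ((mem_fixingSubgroup_iff _).mp φ.2)

theorem sup_centralizer_subgroupOf_eq_ker (h : IsMetacyclicSplitting C K) (hodd : Odd p)
    (hnab : ¬ IsMulCommutative S) :
    ((S : Subgroup G) ⊔ centralizer ((S : Subgroup G) : Set G)).subgroupOf
        (normalizer ((S : Subgroup G) : Set G)) =
      (((commutatorSocle p S).map (S : Subgroup G).subtype).normalizerMonoidHom.comp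
        (inclusion (normalizer_le_normalizer_map_subtype (S : Subgroup G) _))).ker := by
  have hcent := le_centralizer_iff.mp (h.map_commutatorSocle_le_centralizer hodd)
  have hfix : ∀ x : normalizer ((S : Subgroup G) : Set G),
      (x : G) ∈ centralizer ((commutatorSocle p S).map (S : Subgroup G).subtype : Set G) →
      normalizerMonoidHom (S : Subgroup G) x ∈
        fixingSubgroup (MulAut S) (commutatorSocle p S : Set S) := fun x hx =>
    (mem_fixingSubgroup_iff _).mpr fun z hz => Subtype.ext
      (mul_inv_eq_of_eq_mul (hx z (mem_map_of_mem _ hz)).symm)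
  rw [← MonoidHom.comap_ker, normalizerMonoidHom_ker]
  ext x
  refine ⟨fun hx => ?_, fun hx => ?_⟩
  · exact sup_le hcent (centralizer_le (map_subtype_le _)) hx
  · refine mem_sup_centralizer_of_normalizerMonoidHom_mem S
      (h.isPGroup_fixingSubgroup_commutatorSocle hodd hnab) ?_ (hfix x hx)
    rintro _ ⟨s, hs, rfl⟩
    exact hfix s (hcent hs)

theorem isCyclic_normalizer_quotient (h : IsMetacyclicSplitting C K) (hodd : Odd p)
    (hnab : ¬ IsMulCommutative S) :
    IsCyclic (normalizer ((S : Subgroup G) : Set G) ⧸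
        ((S : Subgroup G) ⊔ centralizer ((S : Subgroup G) : Set G)).subgroupOf
          (normalizer ((S : Subgroup G) : Set G))) ∧
      Nat.card (normalizer ((S : Subgroup G) : Set G) ⧸
        ((S : Subgroup G) ⊔ centralizer ((S : Subgroup G) : Set G)).subgroupOf
          (normalizer ((S : Subgroup G) : Set G))) ∣ p - 1 := by
  obtain ⟨z, hzp, hz⟩ := h.exists_zpowers_eq_commutatorSocle S.2 hodd hnab
  have hmap : (commutatorSocle p S).map (S : Subgroup G).subtype = zpowers (z : G) := by
    rw [← hz, MonoidHom.map_zpowers, coe_subtype]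
  have hcyclic : IsCyclic ((commutatorSocle p S).map (S : Subgroup G).subtype) :=
    hmap ▸ inferInstance
  have hcard : Nat.card ((commutatorSocle p S).map (S : Subgroup G).subtype) = p := by
    rw [hmap, Nat.card_zpowers, orderOf_coe, hzp]
  let e := QuotientGroup.quotientMulEquivOfEq (h.sup_centralizer_subgroupOf_eq_ker hodd hnab)
  rw [e.isCyclic, Nat.card_congr e.toEquiv]
  exact isCyclic_quotient_ker_mulAut hcard _

end IsMetacyclicSplitting

theorem stmt15_general (p : ℕ) [Fact p.Prime] (hodd : Odd p) {G : Type*} [Group G] [Finite G]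
    (S : Sylow p G) (hsplit : IsSplitMetacyclic (S : Subgroup G)) :
    ((∃ a b : (S : Subgroup G), a * b ≠ b * a) →
      IsCyclic (normalizer ((S : Subgroup G) : Set G) ⧸
        ((S : Subgroup G) ⊔ centralizer ((S : Subgroup G) : Set G)).subgroupOf
          (normalizer ((S : Subgroup G) : Set G))) ∧
      Nat.card (normalizer ((S : Subgroup G) : Set G) ⧸
        ((S : Subgroup G) ⊔ centralizer ((S : Subgroup G) : Set G)).subgroupOf
          (normalizer ((S : Subgroup G) : Set G))) ∣ p - 1) ∧
    ∀ Q : Subgroup G, Q ≤ S → S ≤ normalizer (Q : Set G) → ∀ g ∈ normalizer (Q : Set G),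
      ∃ n ∈ normalizer ((S : Subgroup G) : Set G), n⁻¹ * g ∈ centralizer (Q : Set G) := by
  obtain ⟨C, K, hC, hCcyc, hKcyc, hinf, hsup⟩ := hsplit
  have h : IsMetacyclicSplitting C K := ⟨hC, hCcyc, hKcyc, hinf, hsup⟩
  refine ⟨fun ⟨a, b, hab⟩ => h.isCyclic_normalizer_quotient hodd fun _ => hab (mul_comm' a b), ?_⟩
  exact fun Q hQS hSQ g hg => h.exists_mem_normalizer_inv_mul_mem_centralizer hodd hQS hSQ hg

theorem stmt15 (p : ℕ) [Fact p.Prime] (hodd : Odd p) {G : Type*} [Group G] [Fintype G]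
    (S : Sylow p G) (hsplit : IsSplitMetacyclic (S : Subgroup G))
    (hnab : ∃ a b : (S : Subgroup G), a * b ≠ b * a) :
    (IsCyclic (Subgroup.normalizer ((S : Subgroup G) : Set G) ⧸
        (((S : Subgroup G) ⊔ Subgroup.centralizer ((S : Subgroup G) : Set G)).subgroupOf
          (Subgroup.normalizer ((S : Subgroup G) : Set G)))) ∧
      Nat.card (Subgroup.normalizer ((S : Subgroup G) : Set G) ⧸
        (((S : Subgroup G) ⊔ Subgroup.centralizer ((S : Subgroup G) : Set G)).subgroupOf
          (Subgroup.normalizer ((S : Subgroup G) : Set G)))) ∣ (p - 1)) ∧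
    ∀ Q : Subgroup G, Q ≠ ⊥ → Q ≤ (S : Subgroup G) →
      Subgroup.Characteristic (Q.subgroupOf (S : Subgroup G)) →
      ((Subgroup.normalizer ((S : Subgroup G) : Set G) : Set G) * (Subgroup.centralizer (Q : Set G) : Set G) =
          (Subgroup.normalizer (Q : Set G) : Set G)) ∧
      ∀ g ∈ Subgroup.normalizer (Q : Set G), ∃ n ∈ Subgroup.normalizer ((S : Subgroup G) : Set G),
        n⁻¹ * g ∈ Subgroup.centralizer (Q : Set G) := by
  obtain ⟨hquot, hfus⟩ := stmt15_general p hodd S hsplit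
  refine ⟨hquot hnab, fun Q _ hQS hQ => ?_⟩
  have hSQ := normalizer_le_normalizer_of_characteristic hQS hQ
  have hex := hfus Q hQS (le_normalizer.trans hSQ)
  exact ⟨normalizer_mul_centralizer_eq hSQ hex, hex⟩
end
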